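/- Let f ∈ C^∞(ℝ^N) be such that fg ∈ S_ω(ℝ^N) for every g ∈ S_ω(ℝ^N). Then f ∈ E_ω(ℝ^N). -/

import Mathlib

open Real Set Filter

noncomputable section

abbrev Euc (N : ℕ) := EuclideanSpace ℝ (Fin N)

/-- single partial derivative in direction `i` -/
noncomputable def pd {N : ℕ} (i : Fin N) (f : Euc N → ℝ) : Euc N → ℝ :=
  fun x => fderiv ℝ f x (EuclideanSpace.single i 1)

/-- iterated partial derivative `∂^α` for a multi-index `α` -/
noncomputable def pdm {N : ℕ} (α : Fin N → ℕ) (f : Euc N → ℝ) : Euc N → ℝ :=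
  ((List.ofFn fun i : Fin N => (pd i)^[α i]).foldr (· ∘ ·) id) f

/-- length `|α|` of a multi-index -/
def msize {N : ℕ} (α : Fin N → ℕ) : ℕ := ∑ i, α i

/-- the Young conjugate `φ*_ω(s) = sup_{t ≥ 0} (s t - ω(e^t))` -/
noncomputable def phiStar (ω : ℝ → ℝ) (s : ℝ) : ℝ :=
  sSup {y : ℝ | ∃ t : ℝ, 0 ≤ t ∧ y = s * t - ω (Real.exp t)}

/-- non-quasianalytic weight function in the sense of Braun-Meise-Taylor -/
structure IsWeightFun (ω : ℝ → ℝ) : Prop where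
  nonneg : ∀ t, 0 ≤ t → 0 ≤ ω t
  cont : ContinuousOn ω (Ici 0)
  mono : MonotoneOn ω (Ici 0)
  alpha : ∃ K : ℝ, 1 ≤ K ∧ ∀ t, 0 ≤ t → ω (2 * t) ≤ K * (1 + ω t)
  beta : MeasureTheory.IntegrableOn (fun t => ω t / (1 + t ^ 2)) (Ici 1)
  gamma : ∃ a : ℝ, ∃ b : ℝ, 0 < b ∧ ∀ t, 0 ≤ t → a + b * Real.log (1 + t) ≤ ω t
  delta : ConvexOn ℝ univ (fun t => ω (Real.exp t))

/-- membership in `𝒮_ω(ℝ^N)` -/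
def MemS (ω : ℝ → ℝ) {N : ℕ} (f : Euc N → ℝ) : Prop :=
  ContDiff ℝ (⊤ : ℕ∞) f ∧ ∀ lam mu : ℝ, 0 < lam → 0 < mu → ∃ C : ℝ,
    ∀ (α : Fin N → ℕ) (x : Euc N),
      Real.exp (mu * ω ‖x‖) * |pdm α f x| ≤ C * Real.exp (lam * phiStar ω (msize α / lam))

/-- membership in `ℰ_ω(ℝ^N)` -/
def MemE (ω : ℝ → ℝ) {N : ℕ} (f : Euc N → ℝ) : Prop :=
  ContDiff ℝ (⊤ : ℕ∞) f ∧ ∀ K : Set (Euc N), IsCompact K → ∀ m : ℕ, 0 < m → ∃ C : ℝ,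
    ∀ (α : Fin N → ℕ), ∀ x ∈ K, |pdm α f x| ≤ C * Real.exp (m * phiStar ω (msize α / m))

/-- membership in `𝒟_ω(ℝ^N)` -/
def MemD (ω : ℝ → ℝ) {N : ℕ} (f : Euc N → ℝ) : Prop :=
  MemE ω f ∧ HasCompactSupport f

/-- membership in `𝒪_{M,ω}(ℝ^N)`: slowly increasing functions of Beurling type -/
def MemOM (ω : ℝ → ℝ) {N : ℕ} (f : Euc N → ℝ) : Prop :=
  ContDiff ℝ (⊤ : ℕ∞) f ∧ ∀ m : ℕ, 0 < m → ∃ C : ℝ, 0 < C ∧ ∃ n : ℕ,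
    ∀ (α : Fin N → ℕ) (x : Euc N),
      |pdm α f x| ≤ C * Real.exp (n * ω ‖x‖ + m * phiStar ω (msize α / m))

/-- the weighted sup norm `r_{m,n}` -/
noncomputable def rNorm (ω : ℝ → ℝ) {N : ℕ} (m : ℕ) (n : ℤ) (f : Euc N → ℝ) : ℝ :=
  ⨆ p : (Fin N → ℕ) × Euc N,
    |pdm p.1 f p.2| * Real.exp (-(n : ℝ) * ω ‖p.2‖ - m * phiStar ω (msize p.1 / m))

/-- finiteness of the norm `r_{m,n}` -/
def rBdd (ω : ℝ → ℝ) {N : ℕ} (m : ℕ) (n : ℤ) (f : Euc N → ℝ) : Prop :=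
  BddAbove (Set.range fun p : (Fin N → ℕ) × Euc N =>
    |pdm p.1 f p.2| * Real.exp (-(n : ℝ) * ω ‖p.2‖ - m * phiStar ω (msize p.1 / m)))

/-- membership in `𝒪^m_{n,ω}(ℝ^N)` -/
def MemOmn (ω : ℝ → ℝ) {N : ℕ} (m : ℕ) (n : ℤ) (f : Euc N → ℝ) : Prop :=
  ContDiff ℝ (⊤ : ℕ∞) f ∧ rBdd ω m n f

/-- the norm `q_{λ,μ}` of `𝒮_ω(ℝ^N)` -/
noncomputable def qNorm (ω : ℝ → ℝ) {N : ℕ} (lam mu : ℝ) (f : Euc N → ℝ) : ℝ :=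
  ⨆ p : (Fin N → ℕ) × Euc N,
    Real.exp (-(lam * phiStar ω (msize p.1 / lam)) + mu * ω ‖p.2‖) * |pdm p.1 f p.2|

/-- finiteness of the norm `q_{m,g}` -/
def qgBdd (ω : ℝ → ℝ) {N : ℕ} (m : ℕ) (g f : Euc N → ℝ) : Prop :=
  BddAbove (Set.range fun p : (Fin N → ℕ) × Euc N =>
    |g p.2| * |pdm p.1 f p.2| * Real.exp (-(m : ℝ) * phiStar ω (msize p.1 / m)))

end

open scoped Topology

/-! ### Calculus of the iterated partial derivatives `pdm` -/

section PartialDerivatives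

open scoped ContDiff

variable {N : ℕ}

lemma contDiff_pd {f : Euc N → ℝ} (hf : ContDiff ℝ ∞ f) (i : Fin N) : ContDiff ℝ ∞ (pd i f) :=
  (hf.fderiv_right (m := ∞) (by simp)).clm_apply contDiff_const

lemma contDiff_pd_iterate {f : Euc N → ℝ} (hf : ContDiff ℝ ∞ f) (i : Fin N) (n : ℕ) :
    ContDiff ℝ ∞ ((pd i)^[n] f) := by
  induction n generalizing f with
  | zero => exact hf
  | succ n ih => exact ih (contDiff_pd hf i)

lemma pd_comm {f : Euc N → ℝ} (hf : ContDiff ℝ ∞ f) (i j : Fin N) :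
    pd i (pd j f) = pd j (pd i f) := by
  have hd : Differentiable ℝ (fderiv ℝ f) :=
    (hf.fderiv_right (m := ∞) (by simp)).differentiable (by simp)
  have key (k l : Fin N) (x : Euc N) : pd k (pd l f) x =
      fderiv ℝ (fderiv ℝ f) x (EuclideanSpace.single k 1) (EuclideanSpace.single l 1) := by
    have h := (hd x).hasFDerivAt.clm_apply
      (hasFDerivAt_const (EuclideanSpace.single l (1 : ℝ)) x)
    change fderiv ℝ (fun y => fderiv ℝ f y (EuclideanSpace.single l 1)) x _ = _
    rw [h.fderiv]
    simp
  funext x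
  rw [key, key]
  exact (hf.contDiffAt.isSymmSndFDerivAt
    (by simpa using show ((2 : ℕ∞) : ℕ∞ω) ≤ ∞ from WithTop.coe_le_coe.2 le_top)).eq _ _

lemma pd_iterate_comm {f : Euc N → ℝ} (hf : ContDiff ℝ ∞ f) (i j : Fin N) (n : ℕ) :
    pd i ((pd j)^[n] f) = (pd j)^[n] (pd i f) := by
  induction n generalizing f with
  | zero => rfl
  | succ n ih => rw [Function.iterate_succ_apply, ih (contDiff_pd hf j), pd_comm hf,
      Function.iterate_succ_apply]

lemma contDiff_foldr_pd (l : List (Fin N)) (α : Fin N → ℕ) {f : Euc N → ℝ}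
    (hf : ContDiff ℝ ∞ f) :
    ContDiff ℝ ∞ ((l.map fun i => (pd i)^[α i]).foldr (· ∘ ·) id f) := by
  induction l with
  | nil => exact hf
  | cons a l ih => exact contDiff_pd_iterate ih a _

lemma pd_foldr_comm (l : List (Fin N)) (α : Fin N → ℕ) {f : Euc N → ℝ}
    (hf : ContDiff ℝ ∞ f) (i : Fin N) :
    pd i ((l.map fun j => (pd j)^[α j]).foldr (· ∘ ·) id f) =
      (l.map fun j => (pd j)^[α j]).foldr (· ∘ ·) id (pd i f) := by
  induction l with
  | nil => rfl
  | cons a l ih =>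
    simp only [List.map_cons, List.foldr_cons, Function.comp_apply]
    rw [pd_iterate_comm (contDiff_foldr_pd l α hf), ih]

lemma foldr_pd_add_single (l : List (Fin N)) (hl : l.Nodup) (α : Fin N → ℕ) {f : Euc N → ℝ}
    (hf : ContDiff ℝ ∞ f) (i : Fin N) :
    (l.map fun j => (pd j)^[(α + Pi.single i 1 : Fin N → ℕ) j]).foldr (· ∘ ·) id f =
      (l.map fun j => (pd j)^[α j]).foldr (· ∘ ·) id (if i ∈ l then pd i f else f) := by
  induction l with
  | nil => simp
  | cons a l ih =>
    rw [List.nodup_cons] at hl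
    simp only [List.map_cons, List.foldr_cons, Function.comp_apply, ih hl.2]
    rcases eq_or_ne a i with rfl | hai
    · simp only [hl.1, List.mem_cons, or_false, if_true, if_false, Pi.add_apply, Pi.single_eq_same]
      rw [Function.iterate_succ_apply, pd_foldr_comm l α hf]
    · simp [List.mem_cons, hai, hai.symm]

lemma pdm_eq_foldr (α : Fin N → ℕ) (f : Euc N → ℝ) :
    pdm α f = ((List.finRange N).map fun i => (pd i)^[α i]).foldr (· ∘ ·) id f := by
  rw [pdm, List.ofFn_eq_map]

lemma pdm_zero (f : Euc N → ℝ) : pdm 0 f = f := by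
  rw [pdm_eq_foldr]
  induction List.finRange N with
  | nil => rfl
  | cons a l ih => simpa using ih

lemma pdm_add_single {f : Euc N → ℝ} (hf : ContDiff ℝ ∞ f) (α : Fin N → ℕ) (i : Fin N) :
    pdm (α + Pi.single i 1) f = pdm α (pd i f) := by
  simp only [pdm_eq_foldr]
  rw [foldr_pd_add_single _ (List.nodup_finRange N) α hf, if_pos (List.mem_finRange i)]

lemma pdm_add_single_nat {f : Euc N → ℝ} (hf : ContDiff ℝ ∞ f) (α : Fin N → ℕ) (i : Fin N)
    (n : ℕ) : pdm (α + Pi.single i n) f = pdm α ((pd i)^[n] f) := by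
  induction n generalizing f with
  | zero => simp
  | succ n ih =>
    rw [Function.iterate_succ_apply, ← ih (contDiff_pd hf i), Pi.single_add, ← add_assoc,
      pdm_add_single hf]

lemma pdm_single {f : Euc N → ℝ} (hf : ContDiff ℝ ∞ f) (i : Fin N) (n : ℕ) :
    pdm (Pi.single i n) f = (pd i)^[n] f := by
  simpa [pdm_zero] using pdm_add_single_nat hf 0 i n

@[simp] lemma msize_zero : msize (0 : Fin N → ℕ) = 0 := by simp [msize]

lemma msize_add (α β : Fin N → ℕ) : msize (α + β) = msize α + msize β := by
  simp [msize, Finset.sum_add_distrib]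

@[simp] lemma msize_single (i : Fin N) (n : ℕ) : msize (Pi.single i n) = n := by
  simp [msize]

lemma eq_zero_of_msize_eq_zero {α : Fin N → ℕ} (h : msize α = 0) : α = 0 := by
  funext i
  simpa using (Finset.sum_eq_zero_iff.1 h) i (Finset.mem_univ i)

lemma exists_eq_add_single {α : Fin N → ℕ} {n : ℕ} (h : msize α = n + 1) :
    ∃ (β : Fin N → ℕ) (i : Fin N), msize β = n ∧ α = β + Pi.single i 1 := by
  obtain ⟨i, -, hi⟩ : ∃ i ∈ Finset.univ, α i ≠ 0 := by
    apply Finset.exists_ne_zero_of_sum_ne_zero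
    change msize α ≠ 0
    omega
  have hα : α = (α - Pi.single i 1) + Pi.single i 1 := by
    funext j
    rcases eq_or_ne j i with rfl | hj
    · simp only [Pi.add_apply, Pi.sub_apply, Pi.single_eq_same]; omega
    · simp [hj]
  refine ⟨_, i, ?_, hα⟩
  have := congrArg msize hα
  rw [msize_add, msize_single] at this
  omega

lemma pd_add {f g : Euc N → ℝ} (hf : ContDiff ℝ ∞ f) (hg : ContDiff ℝ ∞ g) (i : Fin N) :
    pd i (fun x => f x + g x) = fun x => pd i f x + pd i g x := by
  funext x
  have := ((hf.differentiable (by simp) x).hasFDerivAt.add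
    (hg.differentiable (by simp) x).hasFDerivAt).fderiv
  change fderiv ℝ (f + g) x _ = _
  rw [this]
  rfl

lemma pd_mul {f g : Euc N → ℝ} (hf : ContDiff ℝ ∞ f) (hg : ContDiff ℝ ∞ g) (i : Fin N) :
    pd i (fun x => f x * g x) = fun x => pd i f x * g x + f x * pd i g x := by
  funext x
  have := ((hf.differentiable (by simp) x).hasFDerivAt.mul
    (hg.differentiable (by simp) x).hasFDerivAt).fderiv
  change fderiv ℝ (f * g) x _ = _
  rw [this]
  simp [pd]
  ring

lemma pdm_add {f g : Euc N → ℝ} (hf : ContDiff ℝ ∞ f) (hg : ContDiff ℝ ∞ g) (α : Fin N → ℕ) :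
    pdm α (fun x => f x + g x) = fun x => pdm α f x + pdm α g x := by
  induction h : msize α generalizing α f g with
  | zero => simp [eq_zero_of_msize_eq_zero h, pdm_zero]
  | succ n ih =>
    obtain ⟨β, i, hβ, rfl⟩ := exists_eq_add_single h
    rw [pdm_add_single (hf.add hg), pdm_add_single hf, pdm_add_single hg, pd_add hf hg,
      ih (contDiff_pd hf i) (contDiff_pd hg i) β hβ]

/-- A crude form of the Leibniz rule. -/
lemma abs_pdm_mul_le {f g : Euc N → ℝ} (hf : ContDiff ℝ ∞ f) (hg : ContDiff ℝ ∞ g) {x : Euc N}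
    {a b c : ℕ → ℝ} {n : ℕ} (ha : ∀ α, msize α ≤ n → |pdm α f x| ≤ a (msize α))
    (hb : ∀ α, msize α ≤ n → |pdm α g x| ≤ b (msize α))
    (hab : ∀ i j, i + j = n → a i * b j ≤ c n) (α : Fin N → ℕ) (hα : msize α = n) :
    |pdm α (fun y => f y * g y) x| ≤ 2 ^ n * c n := by
  induction n generalizing α f g a b c with
  | zero =>
    have hf0 := ha 0 (by simp)
    have hg0 := hb 0 (by simp)
    simp only [eq_zero_of_msize_eq_zero hα, pdm_zero, msize_zero, abs_mul] at hf0 hg0 ⊢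
    simpa using (mul_le_mul hf0 hg0 (abs_nonneg _) ((abs_nonneg _).trans hf0)).trans
      (hab 0 0 rfl)
  | succ n ih =>
    obtain ⟨β, i, hβ, rfl⟩ := exists_eq_add_single hα
    have hfi := contDiff_pd hf i
    have hgi := contDiff_pd hg i
    rw [pdm_add_single (hf.mul hg), pd_mul hf hg, pdm_add (hfi.mul hg) (hf.mul hgi)]
    have h1 := ih (f := pd i f) (g := g) (a := fun k => a (k + 1)) (b := b)
      (c := fun k => c (k + 1)) hfi hg
      (fun γ hγ => by
        have := ha (γ + Pi.single i 1) (by rw [msize_add, msize_single]; omega)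
        rwa [pdm_add_single hf, msize_add, msize_single] at this)
      (fun γ hγ => hb γ (by omega)) (fun k l hkl => hab (k + 1) l (by omega)) β hβ
    have h2 := ih (f := f) (g := pd i g) (a := a) (b := fun k => b (k + 1))
      (c := fun k => c (k + 1)) hf hgi
      (fun γ hγ => ha γ (by omega))
      (fun γ hγ => by
        have := hb (γ + Pi.single i 1) (by rw [msize_add, msize_single]; omega)
        rwa [pdm_add_single hg, msize_add, msize_single] at this)
      (fun k l hkl => hab k (l + 1) (by omega)) β hβ
    calc _ ≤ _ := abs_add_le _ _
      _ ≤ 2 ^ n * c (n + 1) + 2 ^ n * c (n + 1) := add_le_add h1 h2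
      _ = _ := by ring

lemma norm_iteratedFDeriv_pd_le {f : Euc N → ℝ} (hf : ContDiff ℝ ∞ f) (i : Fin N) (k : ℕ)
    (x : Euc N) : ‖iteratedFDeriv ℝ k (pd i f) x‖ ≤ ‖iteratedFDeriv ℝ (k + 1) f x‖ := by
  have hd : ContDiff ℝ ∞ (fderiv ℝ f) := hf.fderiv_right (by simp)
  have h := (ContinuousLinearMap.apply ℝ ℝ
    (EuclideanSpace.single i (1 : ℝ))).norm_iteratedFDeriv_comp_left (x := x)
    (n := k) hd.contDiffAt (by exact_mod_cast le_top)
  rw [norm_iteratedFDeriv_fderiv] at h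
  refine h.trans (mul_le_of_le_one_left (norm_nonneg _) ?_)
  refine ContinuousLinearMap.opNorm_le_bound _ zero_le_one fun L => ?_
  simpa using L.le_opNorm (EuclideanSpace.single i (1 : ℝ))

lemma abs_pdm_le_norm_iteratedFDeriv {f : Euc N → ℝ} (hf : ContDiff ℝ ∞ f) (α : Fin N → ℕ)
    (x : Euc N) : |pdm α f x| ≤ ‖iteratedFDeriv ℝ (msize α) f x‖ := by
  induction h : msize α generalizing α f with
  | zero => simp [eq_zero_of_msize_eq_zero h, pdm_zero]
  | succ n ih =>
    obtain ⟨β, i, hβ, rfl⟩ := exists_eq_add_single h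
    rw [pdm_add_single hf]
    exact (ih (contDiff_pd hf i) β hβ).trans (norm_iteratedFDeriv_pd_le hf i n x)

lemma iteratedDeriv_comp_line {f : Euc N → ℝ} (hf : ContDiff ℝ ∞ f) (x : Euc N) (i : Fin N)
    (n : ℕ) (t : ℝ) :
    iteratedDeriv n (fun s : ℝ => f (x + s • EuclideanSpace.single i (1 : ℝ))) t =
      (pd i)^[n] f (x + t • EuclideanSpace.single i (1 : ℝ)) := by
  induction n generalizing f with
  | zero => simp
  | succ n ih =>
    rw [iteratedDeriv_succ', Function.iterate_succ_apply, ← ih (contDiff_pd hf i)]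
    congr 1
    funext s
    have h1 : HasDerivAt (fun s : ℝ => x + s • EuclideanSpace.single i (1 : ℝ))
        (EuclideanSpace.single i (1 : ℝ)) s := by
      simpa using ((hasDerivAt_id s).smul_const (EuclideanSpace.single i (1 : ℝ))).const_add x
    exact ((hf.differentiable (by simp) _).hasFDerivAt.comp_hasDerivAt s h1).deriv

end PartialDerivatives

/-! ### Entire extensions and a Bernstein inequality -/

section Bernstein

open scoped ContDiff

lemma tendsto_taylorSum {u : ℝ → ℝ} (hu : ContDiff ℝ ∞ u) {C : ℝ}
    (hC : ∀ n t, |iteratedDeriv n u t| ≤ C) (x : ℝ) {t : ℝ} (ht : 0 < t) :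
    HasSum (fun n : ℕ => iteratedDeriv n u x / n.factorial * t ^ n) (u (x + t)) := by
  have hmem : x + t ∈ Icc x (x + t) := ⟨by linarith, le_rfl⟩
  have hxmem : x ∈ Icc x (x + t) := ⟨le_rfl, by linarith⟩
  have heq (n : ℕ) (y : ℝ) (hy : y ∈ Icc x (x + t)) :
      iteratedDerivWithin n u (Icc x (x + t)) y = iteratedDeriv n u y :=
    iteratedDerivWithin_eq_iteratedDeriv (uniqueDiffOn_Icc (by linarith))
      (hu.of_le (by exact_mod_cast le_top)).contDiffAt hy
  have hsummable : Summable (fun n : ℕ => iteratedDeriv n u x / n.factorial * t ^ n) := by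
    refine Summable.of_norm_bounded ((Real.summable_pow_div_factorial t).mul_left C) fun n => ?_
    rw [Real.norm_eq_abs, abs_mul, abs_div, abs_of_pos (pow_pos ht n), Nat.abs_cast]
    calc _ ≤ C / n.factorial * t ^ n := by gcongr; exact hC n x
      _ = _ := by ring
  have hrem (n : ℕ) : ‖u (x + t) -
      ∑ k ∈ Finset.range (n + 1), iteratedDeriv k u x / k.factorial * t ^ k‖ ≤
        C * t * (t ^ n / n.factorial) := by
    have h := taylor_mean_remainder_bound (n := n) (f := u) (a := x) (b := x + t) (x := x + t)
      (C := C) (by linarith) (hu.of_le (by exact_mod_cast le_top)).contDiffOn hmem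
      (fun y hy => by rw [heq _ y hy]; exact hC _ y)
    rw [taylor_within_apply] at h
    rw [add_sub_cancel_left] at h
    convert h using 1
    · congr 2
      refine Finset.sum_congr rfl fun k _ => ?_
      rw [heq k x hxmem, smul_eq_mul]
      ring
    · ring
  have hlim : Tendsto (fun n : ℕ => C * t * (t ^ n / n.factorial)) atTop (𝓝 0) := by
    simpa using (FloorSemiring.tendsto_pow_div_factorial_atTop t).const_mul (C * t)
  have h1 := (squeeze_zero_norm hrem hlim)
  have h2 := (hsummable.hasSum.tendsto_sum_nat.comp (tendsto_add_atTop_nat 1)).const_sub (u (x + t))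
  have h3 := tendsto_nhds_unique h1 h2
  rw [show u (x + t) = _ from (sub_eq_zero.1 h3.symm)]
  exact hsummable.hasSum

/-- The Taylor series at `0` with derivatives `a n`, as a function on `ℂ`. -/
noncomputable def expSeries (a : ℕ → ℝ) (z : ℂ) : ℂ :=
  ∑' n : ℕ, ((a n / n.factorial : ℝ) : ℂ) * z ^ n

lemma norm_expSeries_term_le {a : ℕ → ℝ} {C : ℝ} (ha : ∀ n, |a n| ≤ C) (z : ℂ) (n : ℕ) :
    ‖((a n / n.factorial : ℝ) : ℂ) * z ^ n‖ ≤ C * (‖z‖ ^ n / n.factorial) := by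
  rw [norm_mul, Complex.norm_real, Real.norm_eq_abs, abs_div, Nat.abs_cast, norm_pow]
  calc _ ≤ C / n.factorial * ‖z‖ ^ n := by gcongr; exact ha n
    _ = _ := by ring

lemma norm_expSeries_le {a : ℕ → ℝ} {C : ℝ} (ha : ∀ n, |a n| ≤ C) (z : ℂ) :
    ‖expSeries a z‖ ≤ C * Real.exp ‖z‖ := by
  refine tsum_of_norm_bounded ?_ (norm_expSeries_term_le ha z)
  rw [Real.exp_eq_exp_ℝ]
  exact (NormedSpace.expSeries_div_hasSum_exp ‖z‖).mul_left C

lemma differentiable_expSeries {a : ℕ → ℝ} {C : ℝ} (ha : ∀ n, |a n| ≤ C) :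
    Differentiable ℂ (expSeries a) := by
  have hC : 0 ≤ C := (abs_nonneg _).trans (ha 0)
  intro z
  have hz : z ∈ Metric.ball (0 : ℂ) (‖z‖ + 1) := by simp
  refine (Complex.differentiableOn_tsum_of_summable_norm
    ((Real.summable_pow_div_factorial (‖z‖ + 1)).mul_left C) (fun n => by fun_prop)
    Metric.isOpen_ball (fun n w hw => ?_)).differentiableAt (Metric.isOpen_ball.mem_nhds hz)
  refine (norm_expSeries_term_le ha w n).trans ?_
  have : ‖w‖ ≤ ‖z‖ + 1 := by simpa using (Metric.mem_ball.1 hw).le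
  gcongr

lemma expSeries_zero (a : ℕ → ℝ) : expSeries a 0 = a 0 := by
  rw [expSeries, tsum_eq_single 0 (fun n hn => by simp [hn])]
  simp

lemma entire_eq_of_eq_on_Ioi {F G : ℂ → ℂ} (hF : Differentiable ℂ F) (hG : Differentiable ℂ G)
    (s : ℝ) (h : ∀ t : ℝ, s < t → F t = G t) : F = G := by
  refine AnalyticOnNhd.eq_of_frequently_eq (z₀ := ((s + 1 : ℝ) : ℂ))
    (hF.differentiableOn.analyticOnNhd isOpen_univ)
    (hG.differentiableOn.analyticOnNhd isOpen_univ) ?_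
  have hten : Tendsto (fun n : ℕ => (((s + 1 : ℝ) + 1 / ((n : ℝ) + 1) : ℝ) : ℂ)) atTop
      (𝓝[≠] ((s + 1 : ℝ) : ℂ)) := by
    refine tendsto_nhdsWithin_iff.2 ⟨?_, Eventually.of_forall fun n => ?_⟩
    · refine (Complex.continuous_ofReal.tendsto _).comp ?_
      simpa using (tendsto_one_div_add_atTop_nhds_zero_nat (𝕜 := ℝ)).const_add (s + 1)
    · have : (0 : ℝ) < 1 / ((n : ℝ) + 1) := by positivity
      simp only [mem_compl_iff, mem_singleton_iff, Complex.ofReal_inj]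
      linarith
  refine hten.frequently (Eventually.frequently (Eventually.of_forall fun n => h _ ?_))
  have : (0 : ℝ) < 1 / ((n : ℝ) + 1) := by positivity
  linarith

/-- A smooth function on `ℝ` with uniformly bounded derivatives extends to an entire function
of exponential type `1`. -/
lemma exists_entire_extension {u : ℝ → ℝ} (hu : ContDiff ℝ ∞ u) {C : ℝ}
    (hC : ∀ n t, |iteratedDeriv n u t| ≤ C) :
    ∃ F : ℂ → ℂ, Differentiable ℂ F ∧ (∀ t : ℝ, F t = u t) ∧
      ∀ z, ‖F z‖ ≤ C * Real.exp |z.im| := by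
  set E : ℝ → ℂ → ℂ := fun x => expSeries fun n => iteratedDeriv n u x with hE
  have hEd (x : ℝ) : Differentiable ℂ (E x) := differentiable_expSeries fun n => hC n x
  have hEu (x t : ℝ) (ht : 0 < t) : E x t = u (x + t) := by
    have := Complex.hasSum_ofReal.2 (tendsto_taylorSum hu hC x ht)
    rw [← this.tsum_eq]
    simp [hE, expSeries]
  have hshift (x : ℝ) : (fun z : ℂ => E 0 (x + z)) = E x := by
    refine entire_eq_of_eq_on_Ioi ((hEd 0).comp (by fun_prop)) (hEd x) |x| fun t ht => ?_
    have h0 : 0 < x + t := by linarith [neg_abs_le x]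
    have h1 : 0 < t := (abs_nonneg x).trans_lt ht
    have := hEu 0 (x + t) h0
    rw [hEu x t h1, ← Complex.ofReal_add, this, zero_add]
  refine ⟨E 0, hEd 0, fun t => ?_, fun z => ?_⟩
  · have := congrFun (hshift t) 0
    simp only [add_zero] at this
    rw [this]
    simp [hE, expSeries_zero]
  · have := congrFun (hshift z.re) (z.im * Complex.I)
    simp only [Complex.re_add_im] at this
    rw [this]
    simpa using norm_expSeries_le (fun n => hC n z.re) (z.im * Complex.I)

lemma norm_le_of_exponential_type {F : ℂ → ℂ} (hF : Differentiable ℂ F) {D M σ : ℝ}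
    (hD : ∀ z, ‖F z‖ ≤ D * Real.exp (σ * |z.im|)) (hM : ∀ t : ℝ, ‖F t‖ ≤ M) (z : ℂ) :
    ‖F z‖ ≤ M * Real.exp (σ * |z.im|) := by
  have key (c : ℂ) (hc : c = Complex.I ∨ c = -Complex.I) (w : ℂ) (hw : 0 ≤ w.re) :
      ‖F (c * w)‖ ≤ M * Real.exp (σ * w.re) := by
    have him (v : ℂ) : |(c * v).im| = |v.re| := by rcases hc with rfl | rfl <;> simp
    have hnorm (v : ℂ) : ‖F (c * v) * Complex.exp (-σ * v)‖ =
        ‖F (c * v)‖ * Real.exp (-(σ * v.re)) := by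
      rw [norm_mul, Complex.norm_exp]
      simp
    have hbd (v : ℂ) (hv : 0 ≤ v.re) : ‖F (c * v) * Complex.exp (-σ * v)‖ ≤ D := by
      rw [hnorm]
      calc _ ≤ D * Real.exp (σ * |(c * v).im|) * Real.exp (-(σ * v.re)) := by gcongr; exact hD _
        _ = D := by rw [him, abs_of_nonneg hv, mul_assoc, ← Real.exp_add]; simp
    have hpl := PhragmenLindelof.right_half_plane_of_bounded_on_real (C := M)
      (f := fun v => F (c * v) * Complex.exp (-σ * v)) (z := w) ?_ ?_ ?_ ?_ hw
    · rw [hnorm] at hpl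
      calc ‖F (c * w)‖ = ‖F (c * w)‖ * Real.exp (-(σ * w.re)) * Real.exp (σ * w.re) := by
            rw [mul_assoc, ← Real.exp_add]; simp
        _ ≤ _ := by gcongr
    · exact (by fun_prop : Differentiable ℂ fun v => F (c * v) * Complex.exp (-σ * v)).diffContOnCl
    · refine ⟨1, by norm_num, 0, ?_⟩
      refine Asymptotics.IsBigO.of_bound D ?_
      refine Filter.eventually_inf_principal.2 (Eventually.of_forall fun v hv => ?_)
      simpa using hbd v (le_of_lt hv)
    · exact ⟨D, Filter.eventually_map.2 ((eventually_ge_atTop 0).mono fun x hx =>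
        hbd x (by simpa using hx))⟩
    · intro x
      rw [hnorm]
      have : c * (x * Complex.I) = ((if c = Complex.I then -x else x : ℝ) : ℂ) := by
        rcases hc with rfl | rfl
        · simp only [if_true]
          rw [mul_left_comm, Complex.I_mul_I]; push_cast; ring
        · rw [if_neg (by intro h; have := congrArg Complex.im h; norm_num at this)]
          linear_combination (-(x : ℂ)) * Complex.I_mul_I
      rw [this]
      simpa using hM _
  rcases le_total 0 z.im with h | h
  · have := key Complex.I (Or.inl rfl) (-Complex.I * z) (by simpa using h)
    rw [← mul_assoc] at this
    simpa [abs_of_nonneg h] using this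
  · have := key (-Complex.I) (Or.inr rfl) (Complex.I * z) (by simpa using h)
    rw [← mul_assoc] at this
    simpa [abs_of_nonpos h] using this

lemma iteratedDeriv_ofReal_of_entire {F : ℂ → ℂ} {u : ℝ → ℝ} (hF : Differentiable ℂ F)
    (hu : ContDiff ℝ ∞ u) (h : ∀ t : ℝ, F t = u t) (n : ℕ) (t : ℝ) :
    iteratedDeriv n F t = iteratedDeriv n u t := by
  induction n generalizing F u with
  | zero => simpa using h t
  | succ n ih =>
    rw [iteratedDeriv_succ', iteratedDeriv_succ']
    refine ih hF.deriv ((contDiff_infty_iff_deriv.1 hu).2) fun s => ?_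
    have h1 : HasDerivAt (fun s : ℝ => F s) (deriv F s) s := (hF s).hasDerivAt.comp_ofReal
    have h2 : HasDerivAt (fun s : ℝ => (u s : ℂ)) (deriv u s : ℝ) s :=
      ((hu.differentiable (by simp) s).hasDerivAt).ofReal_comp
    rw [funext h] at h1
    exact h1.unique h2

/-- Bernstein's inequality (up to constants) for a function whose `k`-th power has uniformly
bounded derivatives, and hence is of exponential type `1`. -/
lemma abs_iteratedDeriv_le_of_pow {u : ℝ → ℝ} (hu : ContDiff ℝ ∞ u) {C C' M : ℝ} {k : ℕ}
    (hk : 0 < k) (hC : ∀ n t, |iteratedDeriv n u t| ≤ C)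
    (hC' : ∀ n t, |iteratedDeriv n (fun s => u s ^ k) t| ≤ C') (hM : ∀ t, |u t| ≤ M)
    (n : ℕ) (t : ℝ) : |iteratedDeriv n u t| ≤ n.factorial * (M * Real.exp 1) / k ^ n := by
  obtain ⟨F, hF, hFu, -⟩ := exists_entire_extension hu hC
  obtain ⟨G, hG, hGu, hGb⟩ := exists_entire_extension (hu.pow k) hC'
  have hFG : (fun z => F z ^ k) = G :=
    entire_eq_of_eq_on_Ioi (hF.pow k) hG 0 fun s _ => by simp [hFu, hGu]
  have hk' : (0 : ℝ) < k := by exact_mod_cast hk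
  set D := max 1 C' with hDdef
  have hD1 : 1 ≤ D := le_max_left _ _
  have hFb (z : ℂ) : ‖F z‖ ≤ D * Real.exp (1 / k * |z.im|) := by
    refine le_of_pow_le_pow_left₀ hk.ne' (by positivity) ?_
    rw [← norm_pow, show F z ^ k = G z from congrFun hFG z, mul_pow, ← Real.exp_nat_mul]
    calc ‖G z‖ ≤ C' * Real.exp |z.im| := hGb z
      _ ≤ D ^ k * Real.exp |z.im| := by
        gcongr
        exact (le_max_right _ _).trans (le_self_pow₀ hD1 hk.ne')
      _ = _ := by congr 2; field_simp
  have hFM := norm_le_of_exponential_type hF hFb (M := M) (fun s => by simpa [hFu] using hM s)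
  have hM0 : 0 ≤ M := (abs_nonneg _).trans (hM 0)
  have hcauchy := Complex.norm_iteratedDeriv_le_of_forall_mem_sphere_norm_le (c := (t : ℂ))
    (R := k) (C := M * Real.exp 1) n hk' hF.diffContOnCl (fun z hz => by
      refine (hFM z).trans ?_
      gcongr
      have : |z.im| ≤ k := by
        have h := Complex.abs_im_le_norm (z - t)
        rw [mem_sphere_iff_norm.1 hz] at h
        simpa using h
      rw [one_div_mul_eq_div]
      exact (div_le_one hk').2 this)
  rw [iteratedDeriv_ofReal_of_entire hF hu hFu] at hcauchy
  simpa using hcauchy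

end Bernstein

/-! ### Weight functions and their Young conjugates -/

section Weight

/-- Finiteness of the supremum defining `phiStar ω s`. -/
def PhiStarFinite (ω : ℝ → ℝ) (s : ℝ) : Prop :=
  BddAbove {y : ℝ | ∃ t : ℝ, 0 ≤ t ∧ y = s * t - ω (Real.exp t)}

variable {ω : ℝ → ℝ}

lemma phiStar_nonneg (h1 : ω 1 = 0) (s : ℝ) : 0 ≤ phiStar ω s := by
  by_cases h : PhiStarFinite ω s
  · exact le_csSup h ⟨0, le_rfl, by simp [h1]⟩
  · rw [phiStar, Real.sSup_of_not_bddAbove h]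

lemma PhiStarFinite.le_phiStar {s : ℝ} (h : PhiStarFinite ω s) {t : ℝ} (ht : 0 ≤ t) :
    s * t - ω (Real.exp t) ≤ phiStar ω s :=
  le_csSup h ⟨t, ht, rfl⟩

lemma phiStar_le {s c : ℝ} (h : ∀ t, 0 ≤ t → s * t - ω (Real.exp t) ≤ c) : phiStar ω s ≤ c :=
  csSup_le ⟨_, 0, le_rfl, rfl⟩ (by rintro _ ⟨t, ht, rfl⟩; exact h t ht)

lemma IsWeightFun.nonneg_exp (hω : IsWeightFun ω) (t : ℝ) : 0 ≤ ω (Real.exp t) :=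
  hω.nonneg _ (Real.exp_pos t).le

lemma IsWeightFun.phiStar_add_le (hω : IsWeightFun ω) {a b : ℝ} (ha : 0 ≤ a) (hb : 0 ≤ b)
    (hab : PhiStarFinite ω (a + b)) : phiStar ω a + phiStar ω b ≤ phiStar ω (a + b) := by
  suffices phiStar ω a ≤ phiStar ω (a + b) - phiStar ω b by linarith
  refine phiStar_le fun t ht => ?_
  suffices phiStar ω b ≤ phiStar ω (a + b) - (a * t - ω (Real.exp t)) by linarith
  refine phiStar_le fun r hr => ?_
  have h1 := hω.nonneg_exp t
  have h2 := hω.nonneg_exp r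
  rcases le_total t r with h | h
  · have := hab.le_phiStar hr
    nlinarith
  · have := hab.le_phiStar ht
    nlinarith

/-- Condition `(α)` allows to absorb geometric factors. -/
lemma IsWeightFun.exists_two_pow_mul_exp_phiStar_le (hω : IsWeightFun ω)
    (hfin : ∀ s, PhiStarFinite ω s) {m : ℝ} (hm : 0 < m) :
    ∃ l C : ℝ, 0 < l ∧ ∀ n : ℕ, 2 ^ n * Real.exp (l * phiStar ω (n / l)) ≤
      C * Real.exp (m * phiStar ω (n / m)) := by
  obtain ⟨K, hK, hα⟩ := hω.alpha
  have hl : 0 < K * m := by positivity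
  refine ⟨K * m, Real.exp (K * m), hl, fun n => ?_⟩
  have h2 : (2 : ℝ) ^ n = Real.exp (n * Real.log 2) := by
    rw [Real.exp_nat_mul, Real.exp_log two_pos]
  rw [h2, ← Real.exp_add, ← Real.exp_add, Real.exp_le_exp]
  suffices phiStar ω (n / (K * m)) ≤
      (K * m + m * phiStar ω (n / m) - n * Real.log 2) / (K * m) by
    rw [le_div_iff₀ hl] at this
    linarith
  refine phiStar_le fun t ht => ?_
  rw [le_div_iff₀ hl]
  have h3 := (hfin (n / m)).le_phiStar (add_nonneg ht (Real.log_nonneg one_le_two))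
  rw [Real.exp_add, Real.exp_log two_pos, mul_comm (Real.exp t)] at h3
  have h4 := hα _ (Real.exp_pos t).le
  have h5 := mul_le_mul_of_nonneg_left h3 hm.le
  have h6 := mul_le_mul_of_nonneg_left h4 hm.le
  have h7 : m * (n / m * (t + Real.log 2) - ω (2 * Real.exp t)) =
    n * (t + Real.log 2) - m * ω (2 * Real.exp t) := by field_simp
  have h8 : (n / (K * m) * t - ω (Real.exp t)) * (K * m) = n * t - K * m * ω (Real.exp t) := by
    have : K ≠ 0 := by positivity
    field_simp
  rw [h7] at h5
  rw [h8]
  nlinarith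

lemma IsWeightFun.isLittleO (hω : IsWeightFun ω) {ε : ℝ} (hε : 0 < ε) :
    ∃ C : ℝ, 0 ≤ C ∧ ∀ r, 0 ≤ r → ω r ≤ ε * r + C := by
  set F : ℝ → ℝ := fun t => ω t / (1 + t ^ 2) with hF
  have hint : MeasureTheory.IntegrableOn F (Ioi 1) := hω.beta.mono_set Ioi_subset_Ici_self
  have hII (a b : ℝ) (ha : 1 ≤ a) (hab : a ≤ b) :
      IntervalIntegrable F MeasureTheory.volume a b := by
    rw [intervalIntegrable_iff_integrableOn_Ioc_of_le hab]
    exact hint.mono_set fun t ht => lt_of_le_of_lt ha ht.1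
  have h1 := MeasureTheory.intervalIntegral_tendsto_integral_Ioi 1 hint tendsto_id
  have h2 := MeasureTheory.intervalIntegral_tendsto_integral_Ioi 1 hint
    (tendsto_id.const_mul_atTop (two_pos (α := ℝ)))
  have h3 := h2.sub h1
  rw [sub_self] at h3
  have h4 := (h3.eventually (gt_mem_nhds (show (0 : ℝ) < ε / 5 by positivity))).and
    (eventually_ge_atTop 1)
  obtain ⟨R, hR⟩ := eventually_atTop.1 h4
  have hR1 := (hR R le_rfl).2
  have hlarge (r : ℝ) (hr : R ≤ r) : ω r ≤ ε * r := by
    obtain ⟨hlt, hr1⟩ := hR r hr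
    simp only [id] at hlt
    rw [← intervalIntegral.integral_add_adjacent_intervals (hII 1 r le_rfl hr1)
      (hII r (2 * r) hr1 (by linarith)), add_sub_cancel_left] at hlt
    have hlow : ∫ _ in r..(2 * r), ω r / (5 * r ^ 2) ≤ ∫ t in r..(2 * r), F t := by
      refine intervalIntegral.integral_mono_on (by linarith) (by simp)
        (hII r (2 * r) hr1 (by linarith)) fun t ht => ?_
      have hωr := hω.nonneg r (by linarith)
      have hωt := hω.mono (show (0 : ℝ) ≤ r by linarith) (show (0 : ℝ) ≤ t by linarith [ht.1]) ht.1
      have : 1 + t ^ 2 ≤ 5 * r ^ 2 := by nlinarith [ht.1, ht.2]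
      exact div_le_div₀ (hωr.trans hωt) hωt (by positivity) this
    rw [intervalIntegral.integral_const, smul_eq_mul] at hlow
    have h5 : (2 * r - r) * (ω r / (5 * r ^ 2)) = ω r / r / 5 := by field_simp; ring
    rw [h5] at hlow
    have h6 : ω r / r ≤ ε := by linarith
    rwa [div_le_iff₀ (by linarith)] at h6
  refine ⟨ω R, hω.nonneg R (by linarith), fun r hr => ?_⟩
  rcases le_total R r with h | h
  · linarith [hlarge r h, hω.nonneg R (by linarith)]
  · have := hω.mono hr (show (0 : ℝ) ≤ R by linarith) h
    nlinarith

lemma IsWeightFun.exists_factorial_mul_exp_le (hω : IsWeightFun ω)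
    (hfin : ∀ s, PhiStarFinite ω s) (h1 : ω 1 = 0) {l : ℝ} (hl : 0 < l) :
    ∃ C : ℝ, 0 ≤ C ∧ ∀ n : ℕ, n.factorial * Real.exp n ≤ C * Real.exp (l * phiStar ω (n / l)) := by
  obtain ⟨c, hc, hωc⟩ := hω.isLittleO (ε := 1 / (l * Real.exp 2)) (by positivity)
  refine ⟨Real.exp (l * c), by positivity, fun n => ?_⟩
  rw [← Real.exp_add]
  rcases Nat.eq_zero_or_pos n with rfl | hn
  · have := phiStar_nonneg h1 ((0 : ℕ) / l)
    simp only [Nat.factorial_zero, Nat.cast_one, Nat.cast_zero, Real.exp_zero, mul_one]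
    exact Real.one_le_exp (by simp only [Nat.cast_zero] at this; positivity)
  have hn1 : (1 : ℝ) ≤ n := by exact_mod_cast hn
  have hn0 : (0 : ℝ) < n := by linarith
  have h2 := (hfin (n / l)).le_phiStar (t := Real.log n + 2)
    (by linarith [Real.log_nonneg hn1])
  rw [Real.exp_add, Real.exp_log hn0] at h2
  have h3 := hωc (n * Real.exp 2) (by positivity)
  have h4 : l * (1 / (l * Real.exp 2) * (n * Real.exp 2)) = n := by field_simp
  have h5 := mul_le_mul_of_nonneg_left h2 hl.le
  have h6 := mul_le_mul_of_nonneg_left h3 hl.le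
  rw [mul_add, h4] at h6
  have h7 : l * (n / l * (Real.log n + 2) - ω (n * Real.exp 2)) =
    n * (Real.log n + 2) - l * ω (n * Real.exp 2) := by field_simp
  rw [h7] at h5
  calc (n.factorial : ℝ) * Real.exp n ≤ (n : ℝ) ^ n * Real.exp n := by
        gcongr; exact_mod_cast Nat.factorial_le_pow n
    _ = Real.exp (n * Real.log n + n) := by
        rw [Real.exp_add, Real.exp_nat_mul, Real.exp_log hn0]
    _ ≤ _ := Real.exp_le_exp.2 (by linarith)

/-- If the Young conjugate is infinite somewhere, then the weight grows at most logarithmically. -/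
lemma IsWeightFun.exp_le_of_not_phiStarFinite (hω : IsWeightFun ω) (h1 : ω 1 = 0) {s : ℝ}
    (hs : ¬ PhiStarFinite ω s) {t : ℝ} (ht : 0 ≤ t) : ω (Real.exp t) ≤ s * t := by
  by_contra! hlt
  have ht0 : 0 < t := by
    refine ht.lt_of_ne fun h => ?_
    rw [← h] at hlt
    simp [h1] at hlt
  refine hs ⟨|s| * t, ?_⟩
  rintro _ ⟨r, hr, rfl⟩
  rcases le_total r t with h | h
  · have := hω.nonneg_exp r
    have h2 : s * r ≤ |s| * t := mul_le_mul (le_abs_self s) h hr (abs_nonneg s)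
    linarith
  · have hr0 : 0 < r := ht0.trans_le h
    have hconv := hω.delta.2 (mem_univ 0) (mem_univ r)
      (sub_nonneg.2 ((div_le_one hr0).2 h)) (by positivity : 0 ≤ t / r) (by ring)
    simp only [smul_eq_mul, mul_zero, zero_add, Real.exp_zero, h1,
      div_mul_cancel₀ t hr0.ne'] at hconv
    have h3 : s * t < t / r * ω (Real.exp r) := hlt.trans_le hconv
    have h4 : s * r < ω (Real.exp r) := by
      have := mul_lt_mul_of_pos_right h3 (div_pos hr0 ht0)
      have e1 : s * t * (r / t) = s * r := by field_simp
      have e2 : t / r * ω (Real.exp r) * (r / t) = ω (Real.exp r) := by field_simp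
      rwa [e1, e2] at this
    have : 0 ≤ |s| * t := by positivity
    linarith

lemma phiStar_eq_zero_of_le {s r : ℝ} (hs : ¬ PhiStarFinite ω s) (h : s ≤ r) :
    phiStar ω r = 0 := by
  refine Real.sSup_of_not_bddAbove fun ⟨b, hb⟩ => hs ⟨b, ?_⟩
  rintro _ ⟨t, ht, rfl⟩
  exact (by nlinarith : _ ≤ r * t - ω (Real.exp t)).trans (hb ⟨t, ht, rfl⟩)

end Weight

/-! ### Weights with finite Young conjugate: dividing by a Gaussian -/

section Gaussian

variable {N : ℕ}

lemma pd_const_mul {f : Euc N → ℝ} (hf : ContDiff ℝ (⊤ : ℕ∞) f) (c : ℝ) (i : Fin N) :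
    pd i (fun x => c * f x) = fun x => c * pd i f x := by
  funext x
  simp [pd, fderiv_const_mul (hf.differentiable (by simp) x)]

lemma pdm_const_mul {f : Euc N → ℝ} (hf : ContDiff ℝ (⊤ : ℕ∞) f) (c : ℝ) (α : Fin N → ℕ) :
    pdm α (fun x => c * f x) = fun x => c * pdm α f x := by
  induction h : msize α generalizing α f with
  | zero => simp [eq_zero_of_msize_eq_zero h, pdm_zero]
  | succ n ih =>
    obtain ⟨β, i, hβ, rfl⟩ := exists_eq_add_single h
    rw [pdm_add_single (contDiff_const.mul hf), pdm_add_single hf, pd_const_mul hf,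
      ih (contDiff_pd hf i) β hβ]

lemma contDiff_coord (i : Fin N) : ContDiff ℝ (⊤ : ℕ∞) fun y : Euc N => y i :=
  (EuclideanSpace.proj i : Euc N →L[ℝ] ℝ).contDiff

lemma pd_coord (i j : Fin N) :
    pd j (fun y : Euc N => y i) = fun _ => if i = j then 1 else 0 := by
  funext x
  change fderiv ℝ (EuclideanSpace.proj i : Euc N →L[ℝ] ℝ) x _ = _
  rw [ContinuousLinearMap.fderiv]
  simp

lemma abs_pdm_coord_mul_le {u : Euc N → ℝ} (hu : ContDiff ℝ (⊤ : ℕ∞) u) {x : Euc N} {A B : ℝ}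
    {n : ℕ} (hA : ∀ γ, msize γ = n → |pdm γ u x| ≤ A)
    (hB : ∀ γ, msize γ + 1 = n → |pdm γ u x| ≤ B) (i : Fin N) (β : Fin N → ℕ)
    (hβ : msize β = n) : |pdm β (fun y => y i * u y) x| ≤ ‖x‖ * A + n * B := by
  induction n generalizing β u with
  | zero =>
    have := hA 0 (by simp)
    simp only [eq_zero_of_msize_eq_zero hβ, pdm_zero, abs_mul] at this ⊢
    simpa using mul_le_mul (PiLp.norm_apply_le x i) this (abs_nonneg _) (norm_nonneg x)
  | succ n ih =>
    obtain ⟨γ, j, hγ, rfl⟩ := exists_eq_add_single hβ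
    have hi := contDiff_coord i
    have huj := contDiff_pd hu j
    have h1 : |pdm γ u x| ≤ B := hB γ (by rw [hγ])
    have h2 := ih huj
      (fun δ hδ => by
        rw [← pdm_add_single hu]; exact hA _ (by rw [msize_add, msize_single, hδ]))
      (fun δ hδ => by
        rw [← pdm_add_single hu]; exact hB _ (by rw [msize_add, msize_single, hδ])) γ hγ
    rw [pdm_add_single (hi.mul hu), pd_mul hi hu, pd_coord,
      pdm_add (contDiff_const.mul hu) (hi.mul huj), pdm_const_mul hu]
    have h3 : |(if i = j then (1 : ℝ) else 0) * pdm γ u x| ≤ B := by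
      split_ifs
      · simpa using h1
      · simpa using (abs_nonneg _).trans h1
    push_cast
    linarith [abs_add_le ((if i = j then (1 : ℝ) else 0) * pdm γ u x)
      (pdm γ (fun y => y i * pd j u y) x)]

/-- The Gaussian `exp (s ‖x‖² / 2)`. -/
noncomputable def gauss (s : ℝ) (x : Euc N) : ℝ := Real.exp (s * ‖x‖ ^ 2 / 2)

lemma contDiff_gauss (s : ℝ) : ContDiff ℝ (⊤ : ℕ∞) (gauss s : Euc N → ℝ) :=
  ((contDiff_const.mul (contDiff_norm_sq ℝ)).div_const 2).exp

lemma pd_gauss (s : ℝ) (i : Fin N) :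
    pd i (gauss s : Euc N → ℝ) = fun x => x i * (s * gauss s x) := by
  funext x
  have h := ((((hasStrictFDerivAt_norm_sq x).hasFDerivAt.const_mul s).mul_const (1 / 2 : ℝ))).exp
  have h' : (gauss s : Euc N → ℝ) = fun x => Real.exp (s * ‖x‖ ^ 2 * (1 / 2)) := by
    funext y
    rw [gauss, mul_one_div]
  rw [pd, h', h.fderiv]
  simp [EuclideanSpace.inner_single_right]
  ring

lemma abs_pdm_gauss_le_pow {s : ℝ} (hs : |s| ≤ 1) (x : Euc N) (n : ℕ) :
    ∀ α : Fin N → ℕ, msize α = n → |pdm α (gauss s) x| ≤ (‖x‖ + n) ^ n * gauss s x := by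
  have hpos : 0 < gauss s x := Real.exp_pos _
  have hr := norm_nonneg x
  induction n using Nat.strong_induction_on with
  | _ n ih =>
  intro α hα
  obtain _ | n := n
  · simp [eq_zero_of_msize_eq_zero hα, pdm_zero, abs_of_pos hpos]
  obtain ⟨β, i, hβ, rfl⟩ := exists_eq_add_single hα
  have hG := contDiff_gauss (N := N) s
  have hsG (γ : Fin N → ℕ) (m : ℕ) (hm : m ≤ n) (hγ : msize γ = m) :
      |pdm γ (fun y => s * gauss s y) x| ≤ (‖x‖ + n) ^ m * gauss s x := by
    rw [pdm_const_mul hG, abs_mul]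
    refine (mul_le_of_le_one_left (abs_nonneg _) hs).trans ((ih m (by omega) γ hγ).trans ?_)
    gcongr
  rw [pdm_add_single hG, pd_gauss]
  have h := abs_pdm_coord_mul_le (contDiff_const.mul hG) (hsG · n le_rfl)
    (B := (‖x‖ + n) ^ (n - 1) * gauss s x)
    (fun γ hγ => hsG γ (n - 1) (by omega) (by omega)) i β hβ
  refine h.trans ?_
  rw [show ‖x‖ * ((‖x‖ + n) ^ n * gauss s x) + n * ((‖x‖ + n) ^ (n - 1) * gauss s x) =
    (‖x‖ * (‖x‖ + n) ^ n + n * (‖x‖ + n) ^ (n - 1)) * gauss s x by ring]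
  refine mul_le_mul_of_nonneg_right ?_ hpos.le
  obtain _ | n := n
  · simp
  have hn : (0 : ℝ) ≤ n := n.cast_nonneg
  push_cast
  calc ‖x‖ * (‖x‖ + (n + 1)) ^ (n + 1) + (n + 1) * (‖x‖ + (n + 1)) ^ n
      = (‖x‖ + (n + 1)) ^ n * (‖x‖ * (‖x‖ + (n + 1)) + (n + 1)) := by ring
    _ ≤ (‖x‖ + (n + 1 + 1)) ^ n * (‖x‖ + (n + 1 + 1)) ^ 2 := by
        gcongr
        · linarith
        · nlinarith
    _ = _ := by ring

lemma abs_pdm_gauss_le {s : ℝ} (hs : |s| ≤ 1) (x : Euc N) (α : Fin N → ℕ) :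
    |pdm α (gauss s) x| ≤
      (msize α).factorial * Real.exp (msize α) * Real.exp (‖x‖ + s * ‖x‖ ^ 2 / 2) := by
  refine (abs_pdm_gauss_le_pow hs x _ α rfl).trans ?_
  have h := Real.pow_div_factorial_le_exp (‖x‖ + msize α) (by positivity) (msize α)
  rw [div_le_iff₀ (by positivity)] at h
  calc _ ≤ Real.exp (‖x‖ + msize α) * (msize α).factorial * gauss s x := by
        gcongr; exact (Real.exp_pos _).le
    _ = _ := by
        rw [gauss, Real.exp_add, Real.exp_add]
        ring

lemma IsWeightFun.memS_gauss {ω : ℝ → ℝ} (hω : IsWeightFun ω) (h1 : ω 1 = 0)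
    (hfin : ∀ s, PhiStarFinite ω s) : MemS ω (gauss (-1) : Euc N → ℝ) := by
  refine ⟨contDiff_gauss _, fun l μ hl hμ => ?_⟩
  obtain ⟨C, hC0, hC⟩ := hω.exists_factorial_mul_exp_le hfin h1 hl
  obtain ⟨c, hc0, hc⟩ := hω.isLittleO (ε := 1 / μ) (by positivity)
  refine ⟨Real.exp (μ * c + 2) * C, fun α x => ?_⟩
  have h2 : μ * ω ‖x‖ + (‖x‖ + -1 * ‖x‖ ^ 2 / 2) ≤ μ * c + 2 := by
    have h3 := mul_le_mul_of_nonneg_left (hc _ (norm_nonneg x)) hμ.le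
    have h4 : μ * (1 / μ * ‖x‖ + c) = ‖x‖ + μ * c := by field_simp
    nlinarith [sq_nonneg (‖x‖ - 2)]
  calc Real.exp (μ * ω ‖x‖) * |pdm α (gauss (-1)) x|
      ≤ Real.exp (μ * ω ‖x‖) * ((msize α).factorial * Real.exp (msize α) *
          Real.exp (‖x‖ + -1 * ‖x‖ ^ 2 / 2)) := by
        gcongr; exact abs_pdm_gauss_le (by simp) x α
    _ = Real.exp (μ * ω ‖x‖ + (‖x‖ + -1 * ‖x‖ ^ 2 / 2)) *
          ((msize α).factorial * Real.exp (msize α)) := by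
        rw [Real.exp_add (μ * ω ‖x‖)]; ring
    _ ≤ Real.exp (μ * c + 2) * (C * Real.exp (l * phiStar ω (msize α / l))) := by
        exact mul_le_mul (Real.exp_le_exp.2 h2) (hC _) (by positivity) (by positivity)
    _ = _ := by ring

lemma memE_of_phiStarFinite {ω : ℝ → ℝ} (hω : IsWeightFun ω) (h1 : ω 1 = 0)
    (hfin : ∀ s, PhiStarFinite ω s) {f : Euc N → ℝ} (hf : ContDiff ℝ (⊤ : ℕ∞) f)
    (hmul : ∀ g : Euc N → ℝ, MemS ω g → MemS ω (fun x => f x * g x)) : MemE ω f := by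
  refine ⟨hf, fun K hK m hm => ?_⟩
  obtain ⟨hh, hbd⟩ := hmul _ (hω.memS_gauss h1 hfin)
  have hfac : f = fun x => f x * gauss (-1) x * gauss 1 x := by
    funext x
    rw [gauss, gauss, mul_assoc, ← Real.exp_add]
    ring_nf
    simp
  have hm' : (0 : ℝ) < m := by exact_mod_cast hm
  obtain ⟨l, C, hl, hC⟩ := hω.exists_two_pow_mul_exp_phiStar_le hfin hm'
  obtain ⟨C₁, hC₁⟩ := hbd l 1 hl one_pos
  obtain ⟨C₂, hC₂0, hC₂⟩ := hω.exists_factorial_mul_exp_le hfin h1 hl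
  obtain ⟨R, hR⟩ := hK.isBounded.exists_norm_le
  set D := C₂ * Real.exp (R + R ^ 2 / 2) with hD
  have hD0 : 0 ≤ D := by positivity
  refine ⟨|C₁| * D * C, fun α x hx => ?_⟩
  have hu (β : Fin N → ℕ) : |pdm β (fun y => f y * gauss (-1) y) x| ≤
      |C₁| * Real.exp (l * phiStar ω (msize β / l)) := by
    have h2 := hC₁ β x
    have h3 : 1 ≤ Real.exp (1 * ω ‖x‖) :=
      Real.one_le_exp (by linarith [hω.nonneg _ (norm_nonneg x)])
    refine (le_mul_of_one_le_left (abs_nonneg _) h3).trans (h2.trans ?_)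
    gcongr
    exact le_abs_self _
  have hv (β : Fin N → ℕ) : |pdm β (gauss 1) x| ≤
      D * Real.exp (l * phiStar ω (msize β / l)) := by
    have hxR := hR x hx
    calc _ ≤ _ := abs_pdm_gauss_le (by simp) x β
      _ ≤ C₂ * Real.exp (l * phiStar ω (msize β / l)) * Real.exp (R + R ^ 2 / 2) := by
        exact mul_le_mul (hC₂ _) (Real.exp_le_exp.2 (by rw [one_mul]; gcongr)) (by positivity)
          (by positivity)
      _ = _ := by rw [hD]; ring
  have key := abs_pdm_mul_le hh (contDiff_gauss 1) (x := x) (n := msize α)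
    (a := fun i => |C₁| * Real.exp (l * phiStar ω (i / l)))
    (b := fun i => D * Real.exp (l * phiStar ω (i / l)))
    (c := fun i => |C₁| * D * Real.exp (l * phiStar ω (i / l)))
    (fun β _ => hu β) (fun β _ => hv β) (fun i j hij => by
      have h4 := hω.phiStar_add_le (a := i / l) (b := j / l) (by positivity) (by positivity)
        (hfin _)
      rw [← add_div, ← Nat.cast_add, hij] at h4
      calc _ = |C₁| * D * Real.exp (l * (phiStar ω (i / l) + phiStar ω (j / l))) := by
            rw [mul_add, Real.exp_add]; ring
        _ ≤ _ := by gcongr) α rfl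
  rw [← hfac] at key
  calc |pdm α f x| ≤ |C₁| * D * (2 ^ msize α * Real.exp (l * phiStar ω (msize α / l))) := by
        linarith
    _ ≤ |C₁| * D * (C * Real.exp (m * phiStar ω (msize α / m))) :=
        mul_le_mul_of_nonneg_left (hC _) (by positivity)
    _ = _ := by ring

end Gaussian

/-! ### Rapidly decreasing functions of exponential type -/

section ExpType

variable {N : ℕ}

/-- Rapidly decreasing smooth functions all of whose `k`-th derivatives are `O(r ^ k)`. -/
structure ExpTypeDecay (r : ℝ) (g : Euc N → ℝ) : Prop where
  contDiff : ContDiff ℝ (⊤ : ℕ∞) g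
  bound : ∀ n : ℕ, ∃ C : ℝ, ∀ (k : ℕ) (x : Euc N),
    (1 + ‖x‖) ^ n * ‖iteratedFDeriv ℝ k g x‖ ≤ C * r ^ k

namespace ExpTypeDecay

variable {r s : ℝ} {f g : Euc N → ℝ}

lemma mono (hr : 0 ≤ r) (hrs : r ≤ s) (hg : ExpTypeDecay r g) : ExpTypeDecay s g := by
  refine ⟨hg.contDiff, fun n => ?_⟩
  obtain ⟨C, hC⟩ := hg.bound n
  refine ⟨|C|, fun k x => (hC k x).trans ?_⟩
  gcongr
  exact le_abs_self C

lemma mul (hf : ExpTypeDecay r f) (hg : ExpTypeDecay s g) :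
    ExpTypeDecay (r + s) (fun x => f x * g x) := by
  refine ⟨hf.contDiff.mul hg.contDiff, fun n => ?_⟩
  obtain ⟨C, hC⟩ := hf.bound n
  obtain ⟨D, hD⟩ := hg.bound 0
  refine ⟨C * D, fun k x => ?_⟩
  calc (1 + ‖x‖) ^ n * ‖iteratedFDeriv ℝ k (fun y => f y * g y) x‖
      ≤ (1 + ‖x‖) ^ n * ∑ i ∈ Finset.range (k + 1), (k.choose i : ℝ) *
          ‖iteratedFDeriv ℝ i f x‖ * ‖iteratedFDeriv ℝ (k - i) g x‖ := by
        gcongr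
        exact norm_iteratedFDeriv_mul_le hf.contDiff hg.contDiff x (by exact_mod_cast le_top)
    _ ≤ ∑ i ∈ Finset.range (k + 1), C * D * (r ^ i * s ^ (k - i) * (k.choose i : ℝ)) := by
        rw [Finset.mul_sum]
        refine Finset.sum_le_sum fun i _ => ?_
        have h1 := hC i x
        have h2 := hD (k - i) x
        rw [pow_zero, one_mul] at h2
        have h3 := mul_le_mul h1 h2 (norm_nonneg _) ((by positivity : (0 : ℝ) ≤ _).trans h1)
        have h4 := mul_le_mul_of_nonneg_left h3 (k.choose i).cast_nonneg (α := ℝ)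
        linarith
    _ = C * D * (r + s) ^ k := by rw [← Finset.mul_sum, add_pow]

lemma pow_succ (hg : ExpTypeDecay r g) (k : ℕ) :
    ExpTypeDecay ((k + 1 : ℕ) * r) (fun x => g x ^ (k + 1)) := by
  induction k with
  | zero => simpa using hg
  | succ k ih =>
    have := ih.mul hg
    simp only [← _root_.pow_succ] at this
    convert this using 1
    push_cast
    ring

lemma comp_smul (hg : ExpTypeDecay r g) {c : ℝ} (hc : 0 < c) (hc1 : c ≤ 1) :
    ExpTypeDecay (c * r) (fun x => g (c • x)) := by
  refine ⟨hg.contDiff.comp (contDiff_const_smul c), fun n => ?_⟩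
  obtain ⟨C, hC⟩ := hg.bound n
  refine ⟨(1 / c) ^ n * C, fun k x => ?_⟩
  rw [iteratedFDeriv_comp_const_smul c (hg.contDiff.of_le (by exact_mod_cast le_top)), norm_smul,
    norm_pow, Real.norm_of_nonneg hc.le]
  have h1 : 1 + ‖x‖ ≤ 1 / c * (1 + ‖c • x‖) := by
    rw [norm_smul, Real.norm_of_nonneg hc.le, one_div, mul_add, inv_mul_cancel_left₀ hc.ne']
    simpa using (one_le_inv₀ hc).2 hc1
  calc (1 + ‖x‖) ^ n * (c ^ k * ‖iteratedFDeriv ℝ k g (c • x)‖)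
      ≤ (1 / c * (1 + ‖c • x‖)) ^ n * (c ^ k * ‖iteratedFDeriv ℝ k g (c • x)‖) := by gcongr
    _ = (1 / c) ^ n * c ^ k * ((1 + ‖c • x‖) ^ n * ‖iteratedFDeriv ℝ k g (c • x)‖) := by
        rw [mul_pow]
        ring
    _ ≤ (1 / c) ^ n * c ^ k * (C * r ^ k) :=
        mul_le_mul_of_nonneg_left (hC k _) (by positivity)
    _ = _ := by ring

end ExpTypeDecay

open FourierTransform in
lemma exists_expTypeDecay (N : ℕ) :
    ∃ (r : ℝ) (g : Euc N → ℝ), 0 < r ∧ ExpTypeDecay r g ∧ g 0 = 1 := by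
  let b : ContDiffBump (0 : Euc N) := ⟨1 / 2, 1, by norm_num, by norm_num⟩
  let β : Euc N → ℂ := fun x => (b x : ℂ)
  have hβ : ContDiff ℝ (⊤ : ℕ∞) β := Complex.ofRealCLM.contDiff.comp b.contDiff
  have hβc : HasCompactSupport β := b.hasCompactSupport.comp_left (g := Complex.ofReal) rfl
  have hsupp (n : ℕ) (v : Euc N) (hv : 1 < ‖v‖) : iteratedFDeriv ℝ n β v = 0 := by
    by_contra h
    have h1 := support_iteratedFDeriv_subset n (Function.mem_support.2 h)
    have h2 : tsupport β ⊆ tsupport b := tsupport_comp_subset Complex.ofReal_zero _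
    have h3 := h2 h1
    rw [b.tsupport_eq, mem_closedBall_zero_iff] at h3
    exact hv.not_ge h3
  have hcont (n : ℕ) : Continuous fun v => ‖iteratedFDeriv ℝ n β v‖ :=
    (hβ.continuous_iteratedFDeriv (by exact_mod_cast le_top)).norm
  have hint (k n : ℕ) :
      MeasureTheory.Integrable fun v : Euc N => ‖v‖ ^ k * ‖iteratedFDeriv ℝ n β v‖ :=
    ((continuous_norm.pow k).mul (hcont n)).integrable_of_hasCompactSupport
      ((hβc.iteratedFDeriv n).norm.mul_left)
  have hle (k n : ℕ) : ∫ v : Euc N, ‖v‖ ^ k * ‖iteratedFDeriv ℝ n β v‖ ≤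
      ∫ v : Euc N, ‖iteratedFDeriv ℝ n β v‖ := by
    refine MeasureTheory.integral_mono (hint k n) (by simpa using hint 0 n) fun v => ?_
    rcases le_or_gt ‖v‖ 1 with h | h
    · exact mul_le_of_le_one_left (norm_nonneg _) (pow_le_one₀ (norm_nonneg v) h)
    · simp [hsupp n v h]
  set F : Euc N → ℂ := 𝓕 β with hF
  have hFs : ContDiff ℝ (⊤ : ℕ∞) F :=
    Real.contDiff_fourier fun n _ => by simpa using hint n 0
  set r : ℝ := 2 * π * Real.exp 2 with hr
  have hFb (n : ℕ) : ∃ C, ∀ (k : ℕ) (x : Euc N),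
      ‖x‖ ^ n * ‖iteratedFDeriv ℝ k F x‖ ≤ C * r ^ k := by
    set A := ∑ q ∈ Finset.range (n + 1), ∫ v : Euc N, ‖iteratedFDeriv ℝ q β v‖ with hA
    have hA0 : 0 ≤ A := Finset.sum_nonneg fun q _ =>
      MeasureTheory.integral_nonneg fun v => norm_nonneg _
    refine ⟨(n + 1).factorial * Real.exp 2 * A, fun k x => ?_⟩
    have h := Real.pow_mul_norm_iteratedFDeriv_fourier_le (K := ⊤) hβ
      (fun k n _ _ => hint k n) (k := k) (n := n) le_top le_top x
    refine h.trans ?_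
    have h2 : ∑ p ∈ Finset.range (k + 1) ×ˢ Finset.range (n + 1),
        ∫ v : Euc N, ‖v‖ ^ p.1 * ‖iteratedFDeriv ℝ p.2 β v‖ ≤ (2 * k + 2) * A := by
      rw [Finset.sum_product]
      refine (Finset.sum_le_sum fun i _ => Finset.sum_le_sum fun q _ => hle i q).trans ?_
      rw [Finset.sum_const, Finset.card_range, nsmul_eq_mul, ← hA]
      gcongr
      push_cast
      linarith [(k.cast_nonneg : (0 : ℝ) ≤ k)]
    have h3 := Real.pow_div_factorial_le_exp (2 * k + 2 : ℝ) (by positivity) (n + 1)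
    rw [div_le_iff₀ (by positivity)] at h3
    calc _ ≤ (2 * π) ^ k * (2 * k + 2) ^ n * ((2 * k + 2) * A) := by gcongr
      _ = (2 * π) ^ k * A * (2 * k + 2) ^ (n + 1) := by ring
      _ ≤ (2 * π) ^ k * A * (Real.exp (2 * k + 2) * (n + 1).factorial) := by gcongr
      _ = _ := by
        rw [hr, Real.exp_add, mul_comm (2 : ℝ) (k : ℝ), Real.exp_nat_mul]
        ring
  have hF0 : 0 < (F 0).re := by
    have h1 : F 0 = ((∫ v, b v : ℝ) : ℂ) := by
      rw [hF, Real.fourier_eq]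
      simp [β, integral_complex_ofReal]
    rw [h1, Complex.ofReal_re]
    exact b.integral_pos
  refine ⟨r, fun x => (F 0).re⁻¹ * (F x).re, by positivity, ⟨?_, fun n => ?_⟩,
    inv_mul_cancel₀ hF0.ne'⟩
  · exact contDiff_const.mul (Complex.reCLM.contDiff.comp hFs)
  · obtain ⟨C₀, hC₀⟩ := hFb 0
    obtain ⟨C₁, hC₁⟩ := hFb n
    set L : ℂ →L[ℝ] ℝ := (F 0).re⁻¹ • Complex.reCLM with hL
    refine ⟨‖L‖ * (2 ^ (n - 1) * (C₀ + C₁)), fun k x => ?_⟩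
    have h1 := L.norm_iteratedFDeriv_comp_left (x := x) (n := k) hFs.contDiffAt
      (by exact_mod_cast le_top)
    have h2 : (1 + ‖x‖) ^ n ≤ 2 ^ (n - 1) * (1 + ‖x‖ ^ n) := by
      simpa using add_pow_le zero_le_one (norm_nonneg x) n
    have h3 := hC₀ k x
    have h4 := hC₁ k x
    rw [pow_zero, one_mul] at h3
    calc _ ≤ 2 ^ (n - 1) * (1 + ‖x‖ ^ n) * (‖L‖ * ‖iteratedFDeriv ℝ k F x‖) := by
          gcongr
          exact h1
      _ = ‖L‖ * (2 ^ (n - 1) * (‖iteratedFDeriv ℝ k F x‖ +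
            ‖x‖ ^ n * ‖iteratedFDeriv ℝ k F x‖)) := by ring
      _ ≤ ‖L‖ * (2 ^ (n - 1) * (C₀ * r ^ k + C₁ * r ^ k)) := by gcongr
      _ = _ := by ring

lemma exists_expTypeDecay_one (N : ℕ) : ∃ g : Euc N → ℝ, ExpTypeDecay 1 g ∧ g 0 = 1 := by
  obtain ⟨r, g, hr, hg, hg0⟩ := exists_expTypeDecay N
  have h1 : 0 < 1 + r := by linarith
  refine ⟨fun x => g ((1 + r)⁻¹ • x), ?_, by simpa using hg0⟩
  refine (hg.comp_smul (inv_pos.2 h1) (inv_le_one_of_one_le₀ (by linarith))).mono (by positivity) ?_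
  rw [inv_mul_le_iff₀ h1]
  linarith

end ExpType

/-! ### Weights of logarithmic growth -/

section LogWeight

variable {N : ℕ}

lemma exists_expTypeDecay_ge (x : ℕ → Euc N) : ∃ g : Euc N → ℝ, ExpTypeDecay 1 g ∧
    ∀ j, (1 / 2) ^ j * ((1 + ‖x j‖) ^ j)⁻¹ ≤ g (x j) := by
  obtain ⟨ψ, hψ, hψ0⟩ := exists_expTypeDecay_one N
  have hφ := (hψ.comp_smul (c := 1 / 2) (by norm_num) (by norm_num)).pow_succ 1
  norm_num at hφ
  set φ : Euc N → ℝ := fun y => ψ ((1 / 2 : ℝ) • y) ^ 2 with hφd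
  have hφnn (y : Euc N) : 0 ≤ φ y := sq_nonneg _
  have hφ0 : φ 0 = 1 := by simp [hφd, hψ0]
  set c : ℕ → ℝ := fun j => (1 / 2) ^ j * ((1 + ‖x j‖) ^ j)⁻¹ with hc
  have hc0 (j : ℕ) : 0 < c j := by positivity
  have hcn (n : ℕ) : ∃ M : ℝ, 0 ≤ M ∧ ∀ j, (1 + ‖x j‖) ^ n * c j ≤ M * (1 / 2) ^ j := by
    refine ⟨∑ j ∈ Finset.range n, (1 + ‖x j‖) ^ n + 1, by positivity, fun j => ?_⟩
    have h1 : (1 + ‖x j‖) ^ n * ((1 + ‖x j‖) ^ j)⁻¹ ≤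
        ∑ j ∈ Finset.range n, (1 + ‖x j‖) ^ n + 1 := by
      have hb : 1 ≤ 1 + ‖x j‖ := by linarith [norm_nonneg (x j)]
      have hS : (0 : ℝ) ≤ ∑ j ∈ Finset.range n, (1 + ‖x j‖) ^ n := by positivity
      rcases lt_or_ge j n with h | h
      · have h2 := Finset.single_le_sum (f := fun j => (1 + ‖x j‖) ^ n)
          (fun i _ => by positivity) (Finset.mem_range.2 h)
        have h3 : (1 + ‖x j‖) ^ n * ((1 + ‖x j‖) ^ j)⁻¹ ≤ (1 + ‖x j‖) ^ n :=
          mul_le_of_le_one_right (by positivity) (inv_le_one_of_one_le₀ (one_le_pow₀ hb))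
        linarith
      · have h3 : (1 + ‖x j‖) ^ n * ((1 + ‖x j‖) ^ j)⁻¹ ≤ 1 := by
          rw [← div_eq_mul_inv, div_le_one (by positivity)]
          exact pow_le_pow_right₀ hb h
        linarith
    calc (1 + ‖x j‖) ^ n * c j = (1 + ‖x j‖) ^ n * ((1 + ‖x j‖) ^ j)⁻¹ * (1 / 2) ^ j := by
          rw [hc]; ring
      _ ≤ _ := by gcongr
  set G : ℕ → Euc N → ℝ := fun j y => c j • φ (y - x j) with hG
  have hφs (j : ℕ) : ContDiff ℝ (⊤ : ℕ∞) fun y => φ (y - x j) :=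
    hφ.contDiff.comp (contDiff_id.sub contDiff_const)
  have hGs (j : ℕ) : ContDiff ℝ (⊤ : ℕ∞) (G j) := (hφs j).const_smul (c j)
  have hGd (k j : ℕ) (y : Euc N) :
      ‖iteratedFDeriv ℝ k (G j) y‖ = c j * ‖iteratedFDeriv ℝ k φ (y - x j)‖ := by
    rw [hG, iteratedFDeriv_const_smul_apply' ((hφs j).of_le (by exact_mod_cast le_top)).contDiffAt,
      norm_smul, iteratedFDeriv_comp_sub, Real.norm_of_nonneg (hc0 j).le]
  have hGn (n : ℕ) : ∃ B : ℝ, ∀ (k j : ℕ) (y : Euc N),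
      (1 + ‖y‖) ^ n * ‖iteratedFDeriv ℝ k (G j) y‖ ≤ B * (1 / 2) ^ j := by
    obtain ⟨M, hM0, hM⟩ := hcn n
    obtain ⟨C, hC⟩ := hφ.bound n
    refine ⟨C * M, fun k j y => ?_⟩
    have h1 : 1 + ‖y‖ ≤ (1 + ‖y - x j‖) * (1 + ‖x j‖) := by
      have h2 : ‖y‖ ≤ ‖y - x j‖ + ‖x j‖ := by simpa using norm_add_le (y - x j) (x j)
      nlinarith [norm_nonneg (y - x j), norm_nonneg (x j)]
    have h3 := hC k (y - x j)
    rw [one_pow, mul_one] at h3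
    have hC0 : 0 ≤ C := (by positivity : (0 : ℝ) ≤ _).trans h3
    have hcj := (hc0 j).le
    rw [hGd]
    calc _ ≤ ((1 + ‖y - x j‖) * (1 + ‖x j‖)) ^ n *
            (c j * ‖iteratedFDeriv ℝ k φ (y - x j)‖) := by gcongr
      _ = ((1 + ‖y - x j‖) ^ n * ‖iteratedFDeriv ℝ k φ (y - x j)‖) *
            ((1 + ‖x j‖) ^ n * c j) := by rw [mul_pow]; ring
      _ ≤ C * (M * (1 / 2) ^ j) := by
          exact mul_le_mul h3 (hM j) (by positivity) hC0
      _ = _ := by ring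
  obtain ⟨B₀, hB₀⟩ := hGn 0
  simp only [pow_zero, one_mul] at hB₀
  have hsum (B : ℝ) : Summable fun j : ℕ => B * (1 / 2 : ℝ) ^ j :=
    summable_geometric_two.mul_left B
  have hts := contDiff_tsum (N := ⊤) (v := fun _ j => B₀ * (1 / 2 : ℝ) ^ j) hGs
    (fun _ _ => hsum B₀) (fun k j y _ => hB₀ k j y)
  refine ⟨fun y => ∑' j, G j y, ⟨hts, fun n => ?_⟩, fun j => ?_⟩
  · obtain ⟨B, hB⟩ := hGn n
    refine ⟨∑' j : ℕ, B * (1 / 2 : ℝ) ^ j, fun k y => ?_⟩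
    rw [one_pow, mul_one, iteratedFDeriv_tsum_apply (N := ⊤) (v := fun _ j => B₀ * (1 / 2 : ℝ) ^ j)
      hGs (fun _ _ => hsum B₀) (fun k j y _ => hB₀ k j y) le_top y]
    have hsn : Summable fun j => ‖iteratedFDeriv ℝ k (G j) y‖ :=
      (hsum B₀).of_nonneg_of_le (fun _ => norm_nonneg _) fun j => hB₀ k j y
    calc _ ≤ (1 + ‖y‖) ^ n * ∑' j, ‖iteratedFDeriv ℝ k (G j) y‖ := by
          gcongr
          exact norm_tsum_le_tsum_norm hsn
      _ = ∑' j, (1 + ‖y‖) ^ n * ‖iteratedFDeriv ℝ k (G j) y‖ := tsum_mul_left.symm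
      _ ≤ _ := (hsn.mul_left _).tsum_le_tsum (fun j => hB k j y) (hsum B)
  · have hs : Summable fun i => G i (x j) := by
      refine (hsum B₀).of_norm_bounded fun i => ?_
      simpa using hB₀ 0 i (x j)
    calc _ = G j (x j) := by simp [hG, hφ0, hc]
      _ ≤ _ := hs.le_tsum j fun i _ => mul_nonneg (hc0 i).le (hφnn _)

variable {ω : ℝ → ℝ} {s : ℝ}

lemma ExpTypeDecay.memS (hω : IsWeightFun ω) (hvan : ∀ t ∈ Set.Icc (0 : ℝ) 1, ω t = 0)
    (hs : ¬ PhiStarFinite ω s) {g : Euc N → ℝ} (hg : ExpTypeDecay 1 g) : MemS ω g := by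
  have h1 : ω 1 = 0 := hvan 1 (by simp)
  refine ⟨hg.contDiff, fun l μ hl hμ => ?_⟩
  obtain ⟨n, hn⟩ := exists_nat_ge (μ * s)
  obtain ⟨C, hC⟩ := hg.bound n
  have hexp (y : Euc N) : Real.exp (μ * ω ‖y‖) ≤ (1 + ‖y‖) ^ n := by
    have hy := norm_nonneg y
    rcases le_total ‖y‖ 1 with h | h
    · rw [hvan _ ⟨hy, h⟩, mul_zero, Real.exp_zero]
      exact one_le_pow₀ (by linarith)
    · have hy0 : 0 < ‖y‖ := by linarith
      have hlog := Real.log_nonneg h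
      have h2 := hω.exp_le_of_not_phiStarFinite h1 hs hlog
      rw [Real.exp_log hy0] at h2
      have h3 : μ * ω ‖y‖ ≤ n * Real.log ‖y‖ := by
        have := mul_le_mul_of_nonneg_left h2 hμ.le
        have := mul_le_mul_of_nonneg_right hn hlog
        linarith
      calc _ ≤ Real.exp (n * Real.log ‖y‖) := Real.exp_le_exp.2 h3
        _ = ‖y‖ ^ n := by rw [Real.exp_nat_mul, Real.exp_log hy0]
        _ ≤ _ := by gcongr; linarith
  refine ⟨|C|, fun α y => ?_⟩
  have h2 := hC (msize α) y
  rw [one_pow, mul_one] at h2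
  calc _ ≤ (1 + ‖y‖) ^ n * ‖iteratedFDeriv ℝ (msize α) g y‖ := by
        gcongr
        · exact hexp y
        · exact abs_pdm_le_norm_iteratedFDeriv hg.contDiff α y
    _ ≤ |C| := h2.trans (le_abs_self C)
    _ ≤ _ := le_mul_of_one_le_right (abs_nonneg C)
        (Real.one_le_exp (mul_nonneg hl.le (phiStar_nonneg h1 _)))

lemma MemS.exists_abs_pdm_le (hω : IsWeightFun ω) (hs : ¬ PhiStarFinite ω s) {g : Euc N → ℝ}
    (hg : MemS ω g) : ∃ C : ℝ, ∀ (α : Fin N → ℕ) (x : Euc N), |pdm α g x| ≤ C := by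
  obtain ⟨C, hC⟩ := hg.2 1 1 one_pos one_pos
  simp only [one_mul, div_one] at hC
  obtain ⟨n, hn⟩ := exists_nat_ge s
  set B := ∑ i ∈ Finset.range n, Real.exp (phiStar ω i) + 1 with hB
  refine ⟨|C| * B, fun α x => ?_⟩
  have h1 : Real.exp (phiStar ω (msize α)) ≤ B := by
    rcases lt_or_ge (msize α) n with h | h
    · have := Finset.single_le_sum (f := fun i : ℕ => Real.exp (phiStar ω i))
        (fun i _ => (Real.exp_pos _).le) (Finset.mem_range.2 h)
      linarith
    · rw [phiStar_eq_zero_of_le hs (hn.trans (by exact_mod_cast h)), Real.exp_zero, hB]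
      have : 0 ≤ ∑ i ∈ Finset.range n, Real.exp (phiStar ω i) := by positivity
      linarith
  calc |pdm α g x| ≤ Real.exp (ω ‖x‖) * |pdm α g x| :=
        le_mul_of_one_le_left (abs_nonneg _) (Real.one_le_exp (hω.nonneg _ (norm_nonneg x)))
    _ ≤ C * Real.exp (phiStar ω (msize α)) := hC α x
    _ ≤ |C| * B := by gcongr; exact le_abs_self C

variable {f : Euc N → ℝ}

lemma MemS.pow_mul (hmul : ∀ g : Euc N → ℝ, MemS ω g → MemS ω (fun x => f x * g x)) (k : ℕ)
    {g : Euc N → ℝ} (hg : MemS ω g) : MemS ω (fun x => f x ^ k * g x) := by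
  induction k with
  | zero => simpa using hg
  | succ k ih => simpa only [pow_succ', mul_assoc] using hmul _ ih

lemma exists_abs_le_of_multiplier (hω : IsWeightFun ω)
    (hvan : ∀ t ∈ Set.Icc (0 : ℝ) 1, ω t = 0) (hs : ¬ PhiStarFinite ω s)
    (hmul : ∀ g : Euc N → ℝ, MemS ω g → MemS ω (fun x => f x * g x)) :
    ∃ (A : ℝ) (m : ℕ), ∀ x, |f x| ≤ A * (1 + ‖x‖) ^ m := by
  by_contra! hcon
  choose x hx using fun j : ℕ => hcon (j * 2 ^ j) j
  obtain ⟨g, hg, hgx⟩ := exists_expTypeDecay_ge x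
  obtain ⟨C, hC⟩ := (hmul g (hg.memS hω hvan hs)).exists_abs_pdm_le hω hs
  obtain ⟨j, hj⟩ := exists_nat_gt C
  have h1 := hC 0 (x j)
  rw [pdm_zero, abs_mul] at h1
  have h2 := (hgx j).trans (le_abs_self _)
  have h3 := mul_le_mul (hx j).le h2 (by positivity) (abs_nonneg _)
  have h4 : (j * 2 ^ j * (1 + ‖x j‖) ^ j) * ((1 / 2) ^ j * ((1 + ‖x j‖) ^ j)⁻¹) = (j : ℝ) := by
    have : (1 + ‖x j‖) ^ j ≠ 0 := by positivity
    rw [one_div, inv_pow]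
    field_simp
  linarith

lemma pdm_sub_const {g : Euc N → ℝ} (hg : ContDiff ℝ (⊤ : ℕ∞) g) (c : ℝ) {α : Fin N → ℕ}
    (hα : α ≠ 0) : pdm α (fun x => g x - c) = pdm α g := by
  obtain ⟨n, hn⟩ := Nat.exists_eq_succ_of_ne_zero fun h => hα (eq_zero_of_msize_eq_zero h)
  obtain ⟨β, i, -, rfl⟩ := exists_eq_add_single hn
  rw [pdm_add_single (hg.sub contDiff_const), pdm_add_single hg]
  congr 1
  funext x
  simp only [pd, fderiv_sub_const]

/-- Multiplying by slowly varying functions hardly changes a derivative. -/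
lemma tendsto_pdm_mul_dilate (hf : ContDiff ℝ (⊤ : ℕ∞) f) {ψ : Euc N → ℝ} (hψ : ExpTypeDecay 1 ψ)
    (hψ0 : ψ 0 = 1) (α : Fin N → ℕ) (x : Euc N) :
    Tendsto (fun k : ℕ => pdm α (fun y => f y * ψ ((1 / (k + 1) : ℝ) • y)) x) atTop
      (𝓝 (pdm α f x)) := by
  obtain ⟨C, hC⟩ := hψ.bound 0
  simp only [pow_zero, one_mul, one_pow, mul_one] at hC
  have hC0 : 0 ≤ C := (norm_nonneg _).trans (hC 0 0)
  set A := ∑ i ∈ Finset.range (msize α + 1), ‖iteratedFDeriv ℝ i f x‖ with hA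
  set ε : ℕ → ℝ := fun k => |ψ ((1 / (k + 1) : ℝ) • x) - 1| + 1 / (k + 1) * C with hε
  have hε0 : Tendsto ε atTop (𝓝 0) := by
    have h1 : Tendsto (fun k : ℕ => (1 / (k + 1) : ℝ)) atTop (𝓝 0) :=
      tendsto_one_div_add_atTop_nhds_zero_nat
    have h2 : Tendsto (fun k : ℕ => ψ ((1 / (k + 1) : ℝ) • x)) atTop (𝓝 1) := by
      have h3 := h1.smul_const x
      rw [zero_smul] at h3
      have h4 := (hψ.contDiff.continuous.tendsto 0).comp h3
      rwa [hψ0] at h4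
    have h5 := (h2.sub_const 1).abs.add (h1.mul_const C)
    rwa [sub_self, abs_zero, zero_mul, add_zero] at h5
  have key (k : ℕ) : ‖pdm α (fun y => f y * ψ ((1 / (k + 1) : ℝ) • y)) x - pdm α f x‖ ≤
      2 ^ msize α * A * ε k := by
    set c : ℝ := 1 / (k + 1) with hc
    have hc0 : 0 < c := by positivity
    have hc1 : c ≤ 1 := by
      rw [hc, div_le_one (by positivity)]
      linarith [(k.cast_nonneg : (0 : ℝ) ≤ k)]
    have hψc : ContDiff ℝ (⊤ : ℕ∞) fun y : Euc N => ψ (c • y) :=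
      hψ.contDiff.comp (contDiff_const_smul c)
    have hw : ContDiff ℝ (⊤ : ℕ∞) fun y : Euc N => ψ (c • y) - 1 := hψc.sub contDiff_const
    have hsplit : (fun y => f y * ψ (c • y)) = fun y => f y + f y * (ψ (c • y) - 1) := by
      funext y; ring
    have hwb (γ : Fin N → ℕ) : |pdm γ (fun y => ψ (c • y) - 1) x| ≤ ε k := by
      rcases eq_or_ne γ 0 with rfl | hγ
      · rw [pdm_zero]
        exact le_add_of_nonneg_right (by positivity)
      · rw [pdm_sub_const hψc 1 hγ]
        refine (abs_pdm_le_norm_iteratedFDeriv hψc γ x).trans ?_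
        rw [iteratedFDeriv_comp_const_smul c (hψ.contDiff.of_le (by exact_mod_cast le_top)),
          norm_smul, norm_pow, Real.norm_of_nonneg hc0.le]
        have h1 : c ^ msize γ ≤ c :=
          pow_le_of_le_one hc0.le hc1 fun h => hγ (eq_zero_of_msize_eq_zero h)
        exact (mul_le_mul h1 (hC _ _) (norm_nonneg _) hc0.le).trans
          (le_add_of_nonneg_left (abs_nonneg _))
    have hεk : 0 ≤ ε k := by positivity
    rw [hsplit, pdm_add hf (hf.mul hw), add_sub_cancel_left, Real.norm_eq_abs, mul_assoc]
    refine abs_pdm_mul_le hf hw (a := fun i => ‖iteratedFDeriv ℝ i f x‖) (b := fun _ => ε k)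
      (c := fun _ => A * ε k) (fun β _ => abs_pdm_le_norm_iteratedFDeriv hf β x)
      (fun β _ => hwb β) (fun i j hij => ?_) α rfl
    refine mul_le_mul_of_nonneg_right ?_ hεk
    exact Finset.single_le_sum (f := fun i => ‖iteratedFDeriv ℝ i f x‖)
      (fun _ _ => norm_nonneg _) (Finset.mem_range.2 (by omega))
  refine tendsto_iff_norm_sub_tendsto_zero.2 (squeeze_zero (fun _ => norm_nonneg _) key ?_)
  simpa using hε0.const_mul (2 ^ msize α * A)

lemma exists_iterate_pd_eq_zero (hω : IsWeightFun ω)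
    (hvan : ∀ t ∈ Set.Icc (0 : ℝ) 1, ω t = 0) (hs : ¬ PhiStarFinite ω s)
    (hf : ContDiff ℝ (⊤ : ℕ∞) f)
    (hmul : ∀ g : Euc N → ℝ, MemS ω g → MemS ω (fun x => f x * g x)) :
    ∃ m : ℕ, ∀ n, m < n → ∀ (i : Fin N) (x : Euc N), (pd i)^[n] f x = 0 := by
  obtain ⟨A, m, hA⟩ := exists_abs_le_of_multiplier hω hvan hs hmul
  obtain ⟨ψ, hψ, hψ0⟩ := exists_expTypeDecay_one N
  obtain ⟨C₀, hC₀⟩ := hψ.bound m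
  have hA0 : 0 ≤ A := by simpa using (abs_nonneg _).trans (hA 0)
  have hψb (z : Euc N) : (1 + ‖z‖) ^ m * |ψ z| ≤ C₀ := by simpa using hC₀ 0 z
  refine ⟨m, fun n hn i x => ?_⟩
  have hbound (k : ℕ) : |(pd i)^[n] (fun y => f y * ψ ((1 / (k + 1) : ℝ) • y)) x| ≤
      n.factorial * (A * C₀ * Real.exp 1) * (1 / (k + 1)) := by
    set c : ℝ := 1 / (k + 1) with hc
    have hk0 : (0 : ℝ) < k + 1 := by positivity
    have hc0 : 0 < c := by positivity
    have hc1 : c ≤ 1 := by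
      rw [hc, div_le_one (by positivity)]
      linarith [(k.cast_nonneg : (0 : ℝ) ≤ k)]
    have hψc := hψ.comp_smul hc0 hc1
    have h1 := hmul _ ((hψc.mono (by positivity) (by linarith)).memS hω hvan hs)
    have h2 : MemS ω fun y => (f y * ψ (c • y)) ^ (k + 1) := by
      simp only [mul_pow]
      refine MemS.pow_mul hmul (k + 1) (ExpTypeDecay.memS hω hvan hs ?_)
      refine (hψc.pow_succ k).mono (by positivity) (le_of_eq ?_)
      rw [hc]
      push_cast
      field_simp
    obtain ⟨D, hD⟩ := h1.exists_abs_pdm_le hω hs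
    obtain ⟨D', hD'⟩ := h2.exists_abs_pdm_le hω hs
    have hM (y : Euc N) : |f y * ψ (c • y)| ≤ A * C₀ * (k + 1) ^ m := by
      have h3 : 1 + ‖y‖ ≤ (k + 1) * (1 + ‖c • y‖) := by
        rw [norm_smul, Real.norm_of_nonneg hc0.le, hc]
        field_simp
        linarith [(k.cast_nonneg : (0 : ℝ) ≤ k)]
      rw [abs_mul]
      calc _ ≤ A * (1 + ‖y‖) ^ m * |ψ (c • y)| := by gcongr; exact hA y
        _ ≤ A * ((k + 1) * (1 + ‖c • y‖)) ^ m * |ψ (c • y)| := by gcongr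
        _ = A * (k + 1) ^ m * ((1 + ‖c • y‖) ^ m * |ψ (c • y)|) := by rw [mul_pow]; ring
        _ ≤ A * (k + 1) ^ m * C₀ := mul_le_mul_of_nonneg_left (hψb _) (by positivity)
        _ = _ := by ring
    have hline : ContDiff ℝ (⊤ : ℕ∞) fun t : ℝ => x + t • EuclideanSpace.single i (1 : ℝ) := by
      fun_prop
    have h := abs_iteratedDeriv_le_of_pow (h1.1.comp hline) k.succ_pos (C := D) (C' := D')
      (fun n t => by
        rw [Function.comp_def, iteratedDeriv_comp_line h1.1, ← pdm_single h1.1]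
        exact hD _ _)
      (fun n t => by
        simp only [Function.comp_def]
        rw [iteratedDeriv_comp_line h2.1, ← pdm_single h2.1]
        exact hD' _ _)
      (fun t => hM _) n 0
    rw [Function.comp_def, iteratedDeriv_comp_line h1.1, zero_smul, add_zero] at h
    refine h.trans ?_
    obtain ⟨p, rfl⟩ := Nat.exists_eq_add_of_lt hn
    have hC₀0 : 0 ≤ C₀ := (by positivity : (0 : ℝ) ≤ _).trans (hψb 0)
    have h4 : (1 : ℝ) ≤ (k + 1) ^ p := one_le_pow₀ (by linarith [(k.cast_nonneg : (0 : ℝ) ≤ k)])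
    rw [hc, mul_one_div, div_le_div_iff₀ (by positivity) hk0]
    push_cast
    calc _ = (m + p + 1).factorial * (A * C₀ * Real.exp 1) * (k + 1) ^ (m + 1) * 1 := by ring
      _ ≤ (m + p + 1).factorial * (A * C₀ * Real.exp 1) * (k + 1) ^ (m + 1) * (k + 1) ^ p := by
        gcongr
      _ = _ := by ring
  have hlim := (tendsto_pdm_mul_dilate hf hψ hψ0 (Pi.single i n) x).abs
  have hzero : Tendsto (fun k : ℕ => n.factorial * (A * C₀ * Real.exp 1) * (1 / (k + 1) : ℝ))
      atTop (𝓝 0) := by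
    simpa using tendsto_one_div_add_atTop_nhds_zero_nat.const_mul
      (n.factorial * (A * C₀ * Real.exp 1) : ℝ)
  rw [← pdm_single hf, ← abs_nonpos_iff]
  refine le_of_tendsto_of_tendsto' hlim hzero fun k => ?_
  have hk : ContDiff ℝ (⊤ : ℕ∞) fun y => f y * ψ ((1 / (k + 1) : ℝ) • y) :=
    hf.mul (hψ.contDiff.comp (contDiff_const_smul _))
  rw [pdm_single hk]
  exact hbound k

lemma pdm_eq_zero_of_iterate_pd {m : ℕ} (hf : ContDiff ℝ (⊤ : ℕ∞) f)
    (hm : ∀ n, m < n → ∀ (i : Fin N) (x : Euc N), (pd i)^[n] f x = 0) {α : Fin N → ℕ}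
    (hα : N * m < msize α) : pdm α f = fun _ => 0 := by
  obtain ⟨i, hi⟩ : ∃ i, m < α i := by
    by_contra! h
    have := Finset.sum_le_card_nsmul Finset.univ α m fun i _ => h i
    simp only [Finset.card_univ, Fintype.card_fin, smul_eq_mul] at this
    exact this.not_gt hα
  have h1 : α = Function.update α i 0 + Pi.single i (α i) := by
    funext j
    rcases eq_or_ne j i with rfl | hj
    · simp
    · simp [hj]
  have h2 : (pd i)^[α i] f = fun _ => 0 := funext (hm _ hi i)
  have h3 : pdm (Function.update α i 0) (fun _ : Euc N => (0 : ℝ)) = fun _ => 0 := by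
    have := pdm_const_mul (contDiff_const (c := (0 : ℝ)) (E := Euc N)) 0 (Function.update α i 0)
    simpa using this
  rw [h1, pdm_add_single_nat hf, h2, h3]

lemma memE_of_not_phiStarFinite (hω : IsWeightFun ω)
    (hvan : ∀ t ∈ Set.Icc (0 : ℝ) 1, ω t = 0) (hs : ¬ PhiStarFinite ω s)
    (hf : ContDiff ℝ (⊤ : ℕ∞) f)
    (hmul : ∀ g : Euc N → ℝ, MemS ω g → MemS ω (fun x => f x * g x)) : MemE ω f := by
  obtain ⟨m, hm⟩ := exists_iterate_pd_eq_zero hω hvan hs hf hmul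
  refine ⟨hf, fun K hK l _ => ?_⟩
  have hcont : Continuous fun x => ∑ i ∈ Finset.range (N * m + 1), ‖iteratedFDeriv ℝ i f x‖ :=
    continuous_finsetSum _ fun i _ =>
      (hf.continuous_iteratedFDeriv (by exact_mod_cast le_top)).norm
  obtain ⟨C, hC⟩ := hK.exists_bound_of_continuousOn hcont.continuousOn
  refine ⟨|C|, fun α x hx => ?_⟩
  refine le_trans ?_ (le_mul_of_one_le_right (abs_nonneg C)
    (Real.one_le_exp (mul_nonneg l.cast_nonneg (phiStar_nonneg (hvan 1 (by simp)) _))))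
  rcases lt_or_ge (N * m) (msize α) with h | h
  · simp [pdm_eq_zero_of_iterate_pd hf hm h]
  · refine (abs_pdm_le_norm_iteratedFDeriv hf α x).trans ?_
    refine (Finset.single_le_sum (f := fun i => ‖iteratedFDeriv ℝ i f x‖)
      (fun _ _ => norm_nonneg _) (Finset.mem_range.2 (Nat.lt_succ_of_le h))).trans ?_
    exact (le_abs_self _).trans ((hC x hx).trans (le_abs_self C))

end LogWeight

theorem multiplier_mem_E {N : ℕ} (ω : ℝ → ℝ) (hω : IsWeightFun ω)
    (hvan : ∀ t ∈ Set.Icc (0:ℝ) 1, ω t = 0)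
    (f : Euc N → ℝ) (hf : ContDiff ℝ (⊤ : ℕ∞) f)
    (hmul : ∀ g : Euc N → ℝ, MemS ω g → MemS ω (fun x => f x * g x)) :
    MemE ω f := by
  by_cases hfin : ∀ s, PhiStarFinite ω s
  · exact memE_of_phiStarFinite hω (hvan 1 (by simp)) hfin hf hmul
  · obtain ⟨s, hs⟩ := not_forall.1 hfin
    exact memE_of_not_phiStarFinite hω hvan hs hf hmul
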